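/- For every non-computable set C, every left-full computable instance T of the cross-constraint problem has a solution (X^i, Y^i)_{i<2} such that (X⁰,Y⁰) ⊕ (X¹,Y¹) does not compute C. -/

import Mathlib

namespace Paper

/-- Codes for oracle Turing machines. -/
inductive OCode : Type
  | zero | succ | left | right | oracle
  | pair (a b : OCode) | comp (a b : OCode) | prec (a b : OCode) | rfind' (a : OCode)

/-- Evaluation of an oracle code with oracle `O`. -/
def oeval (O : ℕ → ℕ) : OCode → ℕ →. ℕ
  | .zero => pure 0
  | .succ => Nat.succ
  | .left => ↑fun n : ℕ => n.unpair.1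
  | .right => ↑fun n : ℕ => n.unpair.2
  | .oracle => ↑fun n : ℕ => O n
  | .pair cf cg => fun n => Nat.pair <$> oeval O cf n <*> oeval O cg n
  | .comp cf cg => fun n => oeval O cg n >>= oeval O cf
  | .prec cf cg =>
    Nat.unpaired fun a n =>
      n.rec (oeval O cf a) fun y IH => do
        let i ← IH
        oeval O cg (Nat.pair a (Nat.pair y i))
  | .rfind' cf =>
    Nat.unpaired fun a m =>
      (Nat.rfind fun n => (fun m => m = 0) <$> oeval O cf (Nat.pair a (n + m))).map (· + m)

/-- A numbering of oracle codes. -/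
def encodeOCode : OCode → ℕ
  | .zero => 0
  | .succ => 1
  | .left => 2
  | .right => 3
  | .oracle => 4
  | .pair a b => 4 * Nat.pair (encodeOCode a) (encodeOCode b) + 5
  | .comp a b => 4 * Nat.pair (encodeOCode a) (encodeOCode b) + 6
  | .prec a b => 4 * Nat.pair (encodeOCode a) (encodeOCode b) + 7
  | .rfind' a => 4 * encodeOCode a + 8

/-- The Turing jump of an oracle. -/
def jump (O : ℕ → ℕ) : Set ℕ :=
  { n | ∃ c : OCode, encodeOCode c = n.unpair.1 ∧ (oeval O c n.unpair.2).Dom }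

/-- `f` is (total) recursive in the oracle `O`. -/
def RecIn (O : ℕ → ℕ) (f : ℕ → ℕ) : Prop :=
  ∃ c : OCode, ∀ n, oeval O c n = Part.some (f n)

/-- The all-zero (trivial, computable) oracle. -/
def zeroO : ℕ → ℕ := fun _ => 0

/-- Characteristic function of a set of naturals. -/
noncomputable def chi (A : Set ℕ) : ℕ → ℕ := A.indicator fun _ => 1

/-- Turing join of two oracles. -/
def joinF (f g : ℕ → ℕ) : ℕ → ℕ := fun n => if n % 2 = 0 then f (n / 2) else g (n / 2)

/-- `A` is Σ⁰₁ relative to the oracle `O` (c.e. in `O`). -/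
def SigmaIn (O : ℕ → ℕ) (A : Set ℕ) : Prop :=
  ∃ c : OCode, ∀ n, n ∈ A ↔ (oeval O c n).Dom

/-- The halting problem `∅′`. -/
noncomputable def emptyJump : Set ℕ := jump zeroO

end Paper
namespace Paper

abbrev Str3 := List (Fin 3)
abbrev StrTup (r : ℕ) := Fin r → List (Fin 2)

/-- A cross-tree `T ⊆ 3^{<ℕ} × (2^{<ℕ})^r`. -/
structure CrossTree (r : ℕ) where
  mem : Set (Str3 × StrTup r)
  len_eq : ∀ p ∈ mem, ∀ i j : Fin r, (p.2 i).length = (p.2 j).length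
  len_le : ∀ p ∈ mem, ∀ i : Fin r, (p.2 i).length ≤ p.1.length
  closed : ∀ p ∈ mem, ∀ q : Str3 × StrTup r, q.1 <+: p.1 → (∀ i, q.2 i <+: p.2 i) →
    (∀ i j : Fin r, (q.2 i).length = (q.2 j).length) →
    (∀ i : Fin r, (q.2 i).length ≤ q.1.length) → q ∈ mem

/-- Length-`n` initial segment of an infinite sequence. -/
def seg {α : Type} (X : ℕ → α) (n : ℕ) : List α := List.ofFn fun i : Fin n => X i

/-- `(X, Y)` is an infinite path of the cross-tree `T`. -/
def IsPath {r : ℕ} (T : CrossTree r) (X : ℕ → Fin 3) (Y : Fin r → ℕ → Fin 2) : Prop :=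
  ∀ n, (seg X n, fun i => seg (Y i) n) ∈ T.mem

/-- The infinite sequence `X` extends the finite string `ρ`. -/
def ExtendsL {α : Type} (X : ℕ → α) (ρ : List α) : Prop :=
  ∀ i : Fin ρ.length, X i = ρ.get i

/-- `T` is left-full below `(ρ, σ)`. -/
def LeftFullBelow {r : ℕ} (T : CrossTree r) (ρ : Str3) (σ : StrTup r) : Prop :=
  ∀ X : ℕ → Fin 3, ExtendsL X ρ →
    ∃ Y : Fin r → ℕ → Fin 2, (∀ i, ExtendsL (Y i) (σ i)) ∧ IsPath T X Y

/-- `T` is left-full (below the pair of empty stems). -/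
def LeftFull {r : ℕ} (T : CrossTree r) : Prop := LeftFullBelow T [] fun _ => []

/-- Encoding of nodes of a cross-tree as natural numbers. -/
def encNode {r : ℕ} (p : Str3 × StrTup r) : ℕ :=
  Nat.pair (Encodable.encode p.1) (Encodable.encode (List.ofFn p.2))

/-- The cross-tree `T` is computable. -/
def TreeComputable {r : ℕ} (T : CrossTree r) : Prop :=
  RecIn zeroO (chi {n | ∃ p ∈ T.mem, encNode p = n})

/-- A solution to the cross-constraint problem on instance `T`: a pair of paths whose
first components are finitely compatible and whose second components are pairwise
infinitely compatible. -/
def CCSolution {r : ℕ} (T : CrossTree r) (X : Fin 2 → ℕ → Fin 3)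
    (Y : Fin 2 → Fin r → ℕ → Fin 2) : Prop :=
  (∀ i : Fin 2, IsPath T (X i) (Y i)) ∧
  (∀ j : Fin 3, {n | X 0 n = j ∧ X 1 n = j}.Finite) ∧
  (∀ s : Fin r, ∃ j : Fin 2, {n | Y 0 s n = j ∧ Y 1 s n = j}.Infinite)

/-- Oracle encoding a path `(X, Y)` of a cross-tree. -/
def solOracle {r : ℕ} (X : ℕ → Fin 3) (Y : Fin r → ℕ → Fin 2) : ℕ → ℕ := fun n =>
  if n.unpair.1 = 0 then (X n.unpair.2 : ℕ)
  else if h : n.unpair.1 - 1 < r then (Y ⟨n.unpair.1 - 1, h⟩ n.unpair.2 : ℕ) else 0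

end Paper

/-!
The proof forces with left-full effectively closed classes of pairs `(X, Y)` below a stem for `X`.
By compactness left-fullness is again an effectively closed property, so the branches of a condition
that are generic enough do not compute `C`. After a first generic pair `(X, Y)`, a second generic
pair `(X', Y')` is chosen such that `X'` avoids the letters of `X` beyond the stem. It remains to
make `Y` and `Y'` agree infinitely often in each coordinate `s`.

The obstacle is a condition with an extension into a disagreement class: the pairs `(X, Y)` such
that each `X'` avoiding `X` has a partner `Y'` that differs from `Y` in the coordinate `s` almost
everywhere. If no condition has such an extension, genericity yields the agreement. Suppose that
there is such an extension, and inside it another one, and let `(X, Y)` be a generic pair there. As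
there are three letters, each sequence `Z` avoids a sequence that avoids `X`; as there are only two
values, differing twice from `Y` means agreeing with it. So, with `Y` in the oracle, the pairs that
agree with `Y` in the coordinate `s` almost everywhere form a left-full class, all of whose branches
agree with one another.
-/

namespace Paper

/-! ### Sequences and strings -/

section Sequences

variable {A : Type} {X Y : ℕ → A} {ρ ρ' : List A} {m n : ℕ}

@[simp] theorem length_seg (X : ℕ → A) (n : ℕ) : (seg X n).length = n := List.length_ofFn

@[simp] theorem getElem_seg (X : ℕ → A) {i : ℕ} (h : i < (seg X n).length) :
    (seg X n)[i] = X i := List.getElem_ofFn h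

theorem getD_seg (X : ℕ → A) {i : ℕ} (h : i < n) (d : A) : (seg X n).getD i d = X i := by
  rw [List.getD_eq_getElem _ _ (by simpa using h), getElem_seg]

theorem seg_congr (h : ∀ i < n, X i = Y i) : seg X n = seg Y n :=
  List.ext_getElem (by simp) fun i hi _ => by simpa using h i (by simpa using hi)

theorem seg_take (X : ℕ → A) (h : m ≤ n) : (seg X n).take m = seg X m :=
  List.ext_getElem (by simpa using h) fun i _ _ => by simp

theorem seg_prefix_seg (X : ℕ → A) (h : m ≤ n) : seg X m <+: seg X n :=
  seg_take X h ▸ List.take_prefix _ _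

theorem seg_eq_map_range (X : ℕ → A) (n : ℕ) : seg X n = (List.range n).map X :=
  List.ext_getElem (by simp) fun i _ _ => by simp

theorem seg_succ (X : ℕ → A) (n : ℕ) : seg X (n + 1) = seg X n ++ [X n] := by
  simp [seg_eq_map_range, List.range_succ]

theorem map_seg {B : Type} (f : A → B) (X : ℕ → A) (n : ℕ) :
    (seg X n).map f = seg (fun i => f (X i)) n :=
  List.ext_getElem (by simp) fun i _ _ => by simp

theorem extendsL_nil (X : ℕ → A) : ExtendsL X [] := fun i => i.elim0

theorem extendsL_iff_getElem : ExtendsL X ρ ↔ ∀ n (h : n < ρ.length), X n = ρ[n] :=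
  ⟨fun hX n h => hX ⟨n, h⟩, fun hX i => hX i i.2⟩

theorem extendsL_iff_seg_eq : ExtendsL X ρ ↔ seg X ρ.length = ρ := by
  rw [extendsL_iff_getElem]
  exact ⟨fun h => List.ext_getElem (by simp) fun i _ hi => by simpa using h i hi,
    fun h n hn => by rw [List.getElem_of_eq h.symm, getElem_seg]⟩

theorem ExtendsL.eq_getD (hX : ExtendsL X ρ) (h : n < ρ.length) (d : A) : X n = ρ.getD n d := by
  rw [List.getD_eq_getElem _ _ h]
  exact hX ⟨n, h⟩

theorem ExtendsL.of_prefix (hX : ExtendsL X ρ') (h : ρ <+: ρ') : ExtendsL X ρ :=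
  extendsL_iff_getElem.2 fun n hn =>
    (extendsL_iff_getElem.1 hX n (hn.trans_le h.length_le)).trans (h.getElem hn).symm

theorem ExtendsL.prefix_seg (hX : ExtendsL X ρ) (h : ρ.length ≤ n) : ρ <+: seg X n := by
  conv_lhs => rw [← extendsL_iff_seg_eq.1 hX]
  exact seg_prefix_seg X h

theorem extendsL_seg : ExtendsL Y (seg X n) ↔ ∀ i < n, Y i = X i := by
  simp [extendsL_iff_getElem]

/-- The sequence that follows the string `ρ` and then the sequence `X`, without shifting `X`. -/
def overlay (ρ : List A) (X : ℕ → A) : ℕ → A := fun n => ρ.getD n (X n)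

theorem overlay_of_lt (X : ℕ → A) (h : n < ρ.length) (d : A) : overlay ρ X n = ρ.getD n d := by
  simp [overlay, h]

theorem overlay_of_le (X : ℕ → A) (h : ρ.length ≤ n) : overlay ρ X n = X n := by
  simp [overlay, h]

theorem extendsL_overlay (ρ : List A) (X : ℕ → A) : ExtendsL (overlay ρ X) ρ :=
  extendsL_iff_getElem.2 fun n h => by simp [overlay, h]

theorem ExtendsL.overlay_eq (hX : ExtendsL X ρ) : overlay ρ X = X := by
  funext n
  rcases lt_or_ge n ρ.length with h | h
  · rw [overlay_of_lt X h (X n), ← hX.eq_getD h]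
  · exact overlay_of_le X h

theorem primrec₂_getD {A : Type} [Primcodable A] (ρ : List A) :
    Primrec₂ fun n (a : A) => ρ.getD n a :=
  (Primrec.option_getD.comp (Primrec.list_getElem?.comp (Primrec.const ρ) Primrec.fst)
    Primrec.snd).of_eq fun _ => (List.getD_eq_getElem?_getD ..).symm

end Sequences

/-! ### Effectively open predicates -/

section EffectivelyOpen

variable {α β : Type*} [Primcodable α] [Primcodable β]

theorem rePred_exists_stage {p : α → Prop} (hp : REPred p) :
    ∃ R : α × ℕ → Prop, PrimrecPred R ∧
      (∀ a i j, i ≤ j → R (a, i) → R (a, j)) ∧ ∀ a, p a ↔ ∃ j, R (a, j) := by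
  obtain ⟨c, hc⟩ := Nat.Partrec.Code.exists_code.1 hp
  refine ⟨fun x => ((c.evaln x.2 (Encodable.encode x.1)).isSome = true), ?_, ?_, fun a => ?_⟩
  · exact Primrec.eq.comp (Primrec.option_isSome.comp (Nat.Partrec.Code.primrec_evaln.comp
      (Primrec.pair (Primrec.pair Primrec.snd (Primrec.const c))
        (Primrec.encode.comp Primrec.fst)))) (Primrec.const true)
  · intro a i j hij h
    obtain ⟨y, hy⟩ := Option.isSome_iff_exists.1 h
    exact Option.isSome_iff_exists.2 ⟨y, Nat.Partrec.Code.evaln_mono hij hy⟩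
  · have hdom : p a ↔ (c.eval (Encodable.encode a)).Dom := by
      rw [hc]
      simp [Part.assert]
    simp only [hdom, Part.dom_iff_mem, Nat.Partrec.Code.evaln_complete,
      Option.isSome_iff_exists, Option.mem_def]
    exact exists_comm

theorem rePred_of_primrecPred {p : α → Prop} (hp : PrimrecPred p) : REPred p :=
  hp.computablePred.to_re

theorem rePred_comp {p : β → Prop} (hp : REPred p) {f : α → β} (hf : Computable f) :
    REPred fun a => p (f a) :=
  Partrec.comp hp hf

theorem countable_rePred : Countable {p : α → Prop // REPred p} := by
  choose code hcode using fun p : {p : α → Prop // REPred p} =>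
    Nat.Partrec.Code.exists_code.1 p.2
  refine Function.Injective.countable (f := code) fun p q hpq => Subtype.ext (funext fun a => ?_)
  have h := congrFun ((hcode p).symm.trans (hpq ▸ hcode q)) (Encodable.encode a)
  simpa [Part.assert] using congrArg Part.Dom h

variable {L M : Type} [Primcodable L] [Primcodable M]

/-- Effectively open (lightface `Σ⁰₁`) predicates of a sequence, uniformly in a parameter: an
enumerable set of pairs (parameter, string) lists the cylinders on which the predicate holds. -/
def EffOpen (U : α → (ℕ → L) → Prop) : Prop :=
  ∃ W : α × List L → Prop, REPred W ∧ ∀ a z, U a z ↔ ∃ k, W (a, seg z k)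

theorem effOpen_of_primrecPred {R : α × List L → Prop} (hR : PrimrecPred R) :
    EffOpen fun a z => ∃ k, R (a, seg z k) :=
  ⟨R, rePred_of_primrecPred hR, fun _ _ => Iff.rfl⟩

theorem effOpen_exists_seg_eq : EffOpen fun (l : List L) (z : ℕ → L) => ∃ k, seg z k = l :=
  effOpen_of_primrecPred (R := fun x => x.2 = x.1) (Primrec.eq.comp Primrec.snd Primrec.fst)

theorem effOpen_of_param {p : α → Prop} (hp : PrimrecPred p) :
    EffOpen fun a (_ : ℕ → L) => p a :=
  ⟨fun x => p x.1, rePred_of_primrecPred (hp.comp Primrec.fst), fun _ _ => exists_const ℕ |>.symm⟩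

theorem effOpen_false : EffOpen fun (_ : α) (_ : ℕ → L) => False :=
  effOpen_of_param (Primrec.eq.comp (Primrec.const 0) (Primrec.const 1)
    |>.of_eq fun _ => by simp)

theorem effOpen_letter_eq {i : α → ℕ} (hi : Primrec i) {y : α → L} (hy : Primrec y) :
    EffOpen fun a z => z (i a) = y a := by
  obtain ⟨W, hW, hUW⟩ := effOpen_of_primrecPred (α := α) (L := L)
    (R := fun x => x.2[i x.1]? = some (y x.1))
    (Primrec.eq.comp (Primrec.list_getElem?.comp Primrec.snd (hi.comp Primrec.fst))
      (Primrec.option_some.comp (hy.comp Primrec.fst)))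
  refine ⟨W, hW, fun a z => Iff.trans ?_ (hUW a z)⟩
  simp only [List.getElem?_eq_some_iff, getElem_seg, length_seg]
  exact ⟨fun h => ⟨i a + 1, (i a).lt_succ_self, h⟩, fun ⟨_, _, h⟩ => h⟩

namespace EffOpen

variable {U V : α → (ℕ → L) → Prop}

theorem congr (hU : EffOpen U) (h : ∀ a z, U a z ↔ V a z) : EffOpen V := by
  obtain ⟨W, hW, hUW⟩ := hU
  exact ⟨W, hW, fun a z => (h a z).symm.trans (hUW a z)⟩

theorem reparam {U : β → (ℕ → L) → Prop} (hU : EffOpen U) {φ : α → β} (hφ : Primrec φ) :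
    EffOpen fun a z => U (φ a) z := by
  obtain ⟨W, hW, hUW⟩ := hU
  exact ⟨fun x => W (φ x.1, x.2),
    rePred_comp hW (Primrec.pair (hφ.comp Primrec.fst) Primrec.snd).to_comp, fun a => hUW (φ a)⟩

theorem exists_primrecPred (hU : EffOpen U) :
    ∃ R : α × List L → Prop, PrimrecPred R ∧
      (∀ a l l', l <+: l' → R (a, l) → R (a, l')) ∧ ∀ a z, U a z ↔ ∃ k, R (a, seg z k) := by
  obtain ⟨W, hW, hUW⟩ := hU
  obtain ⟨S, hS, hSmono, hWS⟩ := rePred_exists_stage hW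
  refine ⟨fun x => ∃ k < x.2.length + 1, S ((x.1, x.2.take k), x.2.length), ?_, ?_, fun a z => ?_⟩
  · have hrel : PrimrecRel fun (k : ℕ) (x : α × List L) =>
        S ((x.1, x.2.take k), x.2.length) :=
      hS.comp (Primrec.pair (Primrec.pair (Primrec.fst.comp Primrec.snd)
        (Primrec.list_take.comp Primrec.fst (Primrec.snd.comp Primrec.snd)))
        (Primrec.list_length.comp (Primrec.snd.comp Primrec.snd)))
    exact (hrel.exists_mem_list.comp (Primrec.list_range.comp
      (Primrec.succ.comp (Primrec.list_length.comp Primrec.snd))) Primrec.id).of_eq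
      fun x => by simp
  · rintro a l l' hl ⟨k, hk, h⟩
    refine ⟨k, hk.trans_le (Nat.succ_le_succ hl.length_le), ?_⟩
    obtain ⟨t, rfl⟩ := hl
    simp only [List.take_append_of_le_length (Nat.le_of_lt_succ hk)]
    exact hSmono _ _ _ (by simp) h
  · simp only [hUW, hWS, length_seg]
    constructor
    · rintro ⟨k, j, h⟩
      refine ⟨max k j, k, by omega, ?_⟩
      rw [seg_take z (le_max_left k j)]
      exact hSmono _ _ _ (le_max_right k j) h
    · rintro ⟨m, k, hk, h⟩
      rw [seg_take z (Nat.le_of_lt_succ hk)] at h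
      exact ⟨k, m, h⟩

theorem or (hU : EffOpen U) (hV : EffOpen V) : EffOpen fun a z => U a z ∨ V a z := by
  obtain ⟨R, hR, -, hUR⟩ := hU.exists_primrecPred
  obtain ⟨S, hS, -, hVS⟩ := hV.exists_primrecPred
  exact (effOpen_of_primrecPred (hR.or hS)).congr fun a z => by rw [hUR, hVS, exists_or]

theorem and (hU : EffOpen U) (hV : EffOpen V) : EffOpen fun a z => U a z ∧ V a z := by
  obtain ⟨R, hR, hRmono, hUR⟩ := hU.exists_primrecPred
  obtain ⟨S, hS, hSmono, hVS⟩ := hV.exists_primrecPred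
  refine (effOpen_of_primrecPred (hR.and hS)).congr fun a z => ?_
  rw [hUR, hVS]
  refine ⟨fun ⟨k, h, h'⟩ => ⟨⟨k, h⟩, k, h'⟩, fun ⟨⟨k, h⟩, m, h'⟩ => ⟨max k m, ?_, ?_⟩⟩
  · exact hRmono _ _ _ (seg_prefix_seg z (le_max_left k m)) h
  · exact hSmono _ _ _ (seg_prefix_seg z (le_max_right k m)) h'

theorem exists_param {U : α × β → (ℕ → L) → Prop} (hU : EffOpen U) :
    EffOpen fun a z => ∃ b, U (a, b) z := by
  rcases isEmpty_or_nonempty β with hβ | ⟨⟨b₀⟩⟩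
  · exact effOpen_false.congr fun _ _ => by simp
  obtain ⟨R, hR, hmono, hUR⟩ := hU.exists_primrecPred
  let dec (m : ℕ) : β := (Encodable.decode m).getD b₀
  have hdec : Primrec dec := Primrec.option_getD.comp Primrec.decode (Primrec.const b₀)
  have hrel : PrimrecRel fun (m : ℕ) (x : α × List L) => R ((x.1, dec m), x.2) :=
    hR.comp (Primrec.pair (Primrec.pair (Primrec.fst.comp Primrec.snd) (hdec.comp Primrec.fst))
      (Primrec.snd.comp Primrec.snd))
  refine (effOpen_of_primrecPred ((hrel.exists_mem_list.comp (Primrec.list_range.comp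
    (Primrec.list_length.comp Primrec.snd)) Primrec.id))).congr fun a z => ?_
  simp only [hUR, List.mem_range, length_seg, id]
  constructor
  · rintro ⟨k, m, -, h⟩
    exact ⟨dec m, k, h⟩
  · rintro ⟨b, k, h⟩
    refine ⟨max k (Encodable.encode b + 1), Encodable.encode b, by omega, ?_⟩
    exact hmono _ _ _ (seg_prefix_seg z (le_max_left _ _)) (by simpa [dec] using h)

theorem forall_lt {U : α × ℕ → (ℕ → L) → Prop} (hU : EffOpen U) {f : α → ℕ} (hf : Primrec f) :
    EffOpen fun a z => ∀ i < f a, U (a, i) z := by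
  obtain ⟨R, hR, hmono, hUR⟩ := hU.exists_primrecPred
  have hrel : PrimrecRel fun (i : ℕ) (x : α × List L) => R ((x.1, i), x.2) :=
    hR.comp (Primrec.pair (Primrec.pair (Primrec.fst.comp Primrec.snd) Primrec.fst)
      (Primrec.snd.comp Primrec.snd))
  refine (effOpen_of_primrecPred ((hrel.forall_mem_list.comp (Primrec.list_range.comp
    (hf.comp Primrec.fst)) Primrec.id))).congr fun a z => ?_
  simp only [hUR, List.mem_range, id]
  refine ⟨fun ⟨k, h⟩ i hi => ⟨k, h i hi⟩, fun h => ?_⟩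
  choose! k hk using h
  refine ⟨(Finset.range (f a)).sup k, fun i hi => ?_⟩
  exact hmono _ _ _ (seg_prefix_seg z (Finset.le_sup (Finset.mem_range.2 hi))) (hk i hi)

theorem exists_nhd (hU : EffOpen U) {a : α} {z : ℕ → L} (h : U a z) :
    ∃ k, ∀ w : ℕ → L, (∀ i < k, w i = z i) → U a w := by
  obtain ⟨W, -, hUW⟩ := hU
  obtain ⟨k, hk⟩ := (hUW a z).1 h
  exact ⟨k, fun w hw => (hUW a w).2 ⟨k, seg_congr hw ▸ hk⟩⟩

theorem comp {U : β → (ℕ → M) → Prop} (hU : EffOpen U) {φ : α → β} (hφ : Primrec φ)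
    {h : α × ℕ × List L → M} (hh : Primrec h) :
    EffOpen fun a z => U (φ a) fun i => h (a, i, seg z (i + 1)) := by
  obtain ⟨W, hW, hUW⟩ := hU
  refine ⟨fun x => W (φ x.1, (List.range x.2.length).map fun i => h (x.1, i, x.2.take (i + 1))),
    rePred_comp hW (Primrec.to_comp ?_), fun a z => ?_⟩
  · refine Primrec.pair (hφ.comp Primrec.fst)
      (Primrec.list_map (Primrec.list_range.comp (Primrec.list_length.comp Primrec.snd)) ?_)
    exact hh.comp (Primrec.pair (Primrec.fst.comp Primrec.fst) (Primrec.pair Primrec.snd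
      (Primrec.list_take.comp (Primrec.succ.comp Primrec.snd) (Primrec.snd.comp Primrec.fst))))
  · refine (hUW _ _).trans <| exists_congr fun k => iff_of_eq (congrArg (fun l => W (φ a, l)) ?_)
    rw [seg_eq_map_range, length_seg]
    exact List.map_congr_left fun i hi => by rw [seg_take z (List.mem_range.1 hi)]

theorem map {U : β → (ℕ → M) → Prop} (hU : EffOpen U) {φ : α → β} (hφ : Primrec φ)
    {g : ℕ → L → M} (hg : Primrec₂ g) : EffOpen fun a z => U (φ a) fun i => g i (z i) := by
  rcases isEmpty_or_nonempty L with hL | ⟨⟨x₀⟩⟩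
  · exact effOpen_false.congr fun _ z => isEmptyElim (z 0)
  refine (hU.comp hφ (h := fun x : α × ℕ × List L => g x.2.1 (x.2.2.getD x.2.1 x₀))
    ?_).congr fun a z => by simp only [getD_seg z (Nat.lt_succ_self _)]
  have hi : Primrec fun x : α × ℕ × List L => x.2.1 := Primrec.fst.comp Primrec.snd
  exact hg.comp hi ((Primrec.list_getD x₀).comp (Primrec.snd.comp Primrec.snd) hi)

end EffOpen

theorem effOpen_exists_letter {D : ℕ × L → Prop} (hD : PrimrecPred D) :
    EffOpen fun (_ : α) (z : ℕ → L) => ∃ i, D (i, z i) := by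
  have hread : EffOpen fun (x : α × ℕ × L) (z : ℕ → L) => z x.2.1 = x.2.2 :=
    effOpen_letter_eq (Primrec.fst.comp Primrec.snd) (Primrec.snd.comp Primrec.snd)
  exact (hread.and (effOpen_of_param (hD.comp Primrec.snd))).exists_param.congr
    fun _ z => by simp

/-- All the strings over `L × A` whose first components form the string `l`. -/
noncomputable def lifts (A : Type) [Finite A] (l : List L) : List (List (L × A)) :=
  l.foldr (fun x vs => vs.flatMap fun v =>
    (Set.finite_univ (α := A)).toFinset.toList.map fun a => (x, a) :: v) [[]]

variable {A : Type}

theorem exists_seq_of_map_fst {L : Type} [Inhabited A] {z : ℕ → L} {k : ℕ} {v : List (L × A)}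
    (h : v.map Prod.fst = seg z k) : ∃ w : ℕ → A, v = seg (fun i => (z i, w i)) k := by
  have hlen : v.length = k := by simpa using congrArg List.length h
  refine ⟨fun i => (v.map Prod.snd).getD i default, List.ext_getElem (by simpa using hlen) ?_⟩
  intro i hi _
  have hz : v[i].1 = z i := by
    simpa [hi] using List.getElem_of_eq h (i := i) (by simpa using hi)
  simp [hi, ← hz]

variable [Finite A]

theorem mem_lifts {L : Type} {l : List L} {v : List (L × A)} :
    v ∈ lifts A l ↔ v.map Prod.fst = l := by
  induction l generalizing v with
  | nil => simp [lifts]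
  | cons x l ih =>
    have hcons : v ∈ lifts A (x :: l) ↔ ∃ u ∈ lifts A l, ∃ a, (x, a) :: u = v := by simp [lifts]
    simp only [hcons, ih, List.map_eq_cons_iff, Prod.exists]
    constructor
    · rintro ⟨u, hu, a, rfl⟩
      exact ⟨x, a, u, rfl, rfl, hu⟩
    · rintro ⟨y, a, u, rfl, rfl, hu⟩
      exact ⟨u, hu, a, rfl⟩

theorem isOpen_of_nhd {A : Type} [TopologicalSpace A] [DiscreteTopology A] {S : Set (ℕ → A)}
    (h : ∀ w ∈ S, ∃ k, ∀ w' : ℕ → A, (∀ i < k, w' i = w i) → w' ∈ S) : IsOpen S := by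
  refine isOpen_iff_forall_mem_open.2 fun w hw => ?_
  obtain ⟨k, hk⟩ := h w hw
  exact ⟨Set.pi (Set.Iio k) fun i => {w i}, fun w' hw' => hk w' hw',
    isOpen_set_pi (Set.finite_Iio k) fun i _ => isOpen_discrete _, fun i _ => rfl⟩

theorem exists_level_of_forall {S : ℕ → Set (ℕ → A)} (hmono : Monotone S)
    (hS : ∀ k, ∀ w ∈ S k, ∀ w' : ℕ → A, (∀ i < k, w' i = w i) → w' ∈ S k)
    (h : ∀ w, ∃ k, w ∈ S k) : ∃ k, ∀ w, w ∈ S k := by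
  let _ : TopologicalSpace A := ⊥
  have : DiscreteTopology A := ⟨rfl⟩
  obtain ⟨k, hk⟩ := isCompact_univ.elim_directed_cover S
    (fun k => isOpen_of_nhd fun w hw => ⟨k, hS k w hw⟩)
    (fun w _ => Set.mem_iUnion.2 (h w)) hmono.directed_le
  exact ⟨k, fun w => hk (Set.mem_univ w)⟩

variable [Primcodable A]

theorem primrec_lifts : Primrec (lifts (L := L) A) := by
  refine Primrec.list_foldr (h := fun _ (p : L × List (List (L × A))) => p.2.flatMap fun v =>
    (Set.finite_univ (α := A)).toFinset.toList.map fun a => (p.1, a) :: v)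
    Primrec.id (Primrec.const [[]]) ?_
  refine Primrec.list_flatMap (Primrec.snd.comp Primrec.snd) ?_
  exact Primrec.list_map (Primrec.const _) (Primrec.list_cons.comp
    (Primrec.pair (Primrec.fst.comp (Primrec.snd.comp (Primrec.fst.comp Primrec.fst)))
      Primrec.snd) (Primrec.snd.comp Primrec.fst))

namespace EffOpen

theorem exists_seq [Inhabited A] {U : α → (ℕ → L × A) → Prop} (hU : EffOpen U) :
    EffOpen fun a (z : ℕ → L) => ∃ w : ℕ → A, U a fun i => (z i, w i) := by
  obtain ⟨R, hR, -, hUR⟩ := hU.exists_primrecPred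
  have hrel : PrimrecRel fun (v : List (L × A)) (x : α × List L) => R (x.1, v) :=
    hR.comp (Primrec.pair (Primrec.fst.comp Primrec.snd) Primrec.fst)
  refine (effOpen_of_primrecPred (hrel.exists_mem_list.comp (primrec_lifts.comp Primrec.snd)
    Primrec.id)).congr fun a z => ?_
  simp only [hUR, mem_lifts]
  constructor
  · rintro ⟨k, v, hv, h⟩
    obtain ⟨w, rfl⟩ := exists_seq_of_map_fst hv
    exact ⟨w, k, h⟩
  · rintro ⟨w, k, h⟩
    exact ⟨k, _, map_seg _ _ _, h⟩

theorem forall_seq [Inhabited A] {U : α → (ℕ → L × A) → Prop} (hU : EffOpen U) :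
    EffOpen fun a (z : ℕ → L) => ∀ w : ℕ → A, U a fun i => (z i, w i) := by
  obtain ⟨R, hR, hmono, hUR⟩ := hU.exists_primrecPred
  have hrel : PrimrecRel fun (v : List (L × A)) (x : α × List L) => R (x.1, v) :=
    hR.comp (Primrec.pair (Primrec.fst.comp Primrec.snd) Primrec.fst)
  refine (effOpen_of_primrecPred (hrel.forall_mem_list.comp (primrec_lifts.comp Primrec.snd)
    Primrec.id)).congr fun a z => ?_
  simp only [hUR, mem_lifts]
  refine ⟨fun ⟨k, hk⟩ w => ⟨k, hk _ (map_seg _ _ _)⟩, fun h => ?_⟩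
  obtain ⟨k, hk⟩ := exists_level_of_forall
    (S := fun k => {w | R (a, seg (fun i => (z i, w i)) k)})
    (fun k k' hkk' w hw => hmono _ _ _ (seg_prefix_seg _ hkk') hw)
    (fun k w hw w' hww' => by
      rwa [Set.mem_ofPred_eq, seg_congr fun i hi => by rw [hww' i hi]]) h
  refine ⟨k, fun v hv => ?_⟩
  obtain ⟨w, rfl⟩ := exists_seq_of_map_fst hv
  exact hk w

end EffOpen

end EffectivelyOpen

/-! ### Oracle computations -/

section OracleComputations

theorem mem_natRec_iff {p : Part ℕ} {g : ℕ → ℕ →. ℕ} {n v : ℕ} :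
    v ∈ (Nat.rec p (fun y (IH : Part ℕ) => IH.bind (g y)) n : Part ℕ) ↔
      ∃ l : List ℕ, (l.getD n 0 = v ∧ l.getD 0 0 ∈ p) ∧
        ∀ i < n, l.getD (i + 1) 0 ∈ g i (l.getD i 0) := by
  suffices h : v ∈ (Nat.rec p (fun y (IH : Part ℕ) => IH.bind (g y)) n : Part ℕ) ↔
      ∃ f : ℕ → ℕ, (f n = v ∧ f 0 ∈ p) ∧ ∀ i < n, f (i + 1) ∈ g i (f i) by
    refine h.trans ⟨fun ⟨f, ⟨hn, h0⟩, hf⟩ => ⟨seg f (n + 1), ⟨?_, ?_⟩, fun i hi => ?_⟩,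
      fun ⟨l, hl⟩ => ⟨fun i => l.getD i 0, hl⟩⟩
    · rwa [getD_seg f n.lt_succ_self]
    · rwa [getD_seg f n.succ_pos]
    · rw [getD_seg f (by omega), getD_seg f (by omega)]
      exact hf i hi
  induction n generalizing v with
  | zero => exact ⟨fun h => ⟨fun _ => v, ⟨rfl, h⟩, by simp⟩, fun ⟨_, ⟨hv, h⟩, _⟩ => hv ▸ h⟩
  | succ n ih =>
    refine Part.mem_bind_iff.trans ?_
    simp only [ih]
    constructor
    · rintro ⟨_, ⟨f, ⟨rfl, h0⟩, hf⟩, hv⟩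
      refine ⟨Function.update f (n + 1) v, ⟨by simp, by simpa using h0⟩, fun i hi => ?_⟩
      rw [Function.update_of_ne (by omega : i ≠ n + 1)]
      rcases Nat.lt_succ_iff_lt_or_eq.1 hi with hi | rfl
      · rw [Function.update_of_ne (by omega)]
        exact hf i hi
      · simpa using hv
    · rintro ⟨f, ⟨rfl, h0⟩, hf⟩
      exact ⟨f n, ⟨f, ⟨rfl, h0⟩, fun i hi => hf i (by omega)⟩, hf n n.lt_succ_self⟩

variable {f g : OCode}

theorem mem_oeval_pair {O : ℕ → ℕ} {n v : ℕ} : v ∈ oeval O (.pair f g) n ↔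
    v.unpair.1 ∈ oeval O f n ∧ v.unpair.2 ∈ oeval O g n := by
  simp only [oeval, Seq.seq, Part.map_eq_map, Part.bind_map, Part.mem_bind_iff, Part.mem_map_iff]
  constructor
  · rintro ⟨x, hx, y, hy, rfl⟩
    simpa using ⟨hx, hy⟩
  · rintro ⟨hx, hy⟩
    exact ⟨_, hx, _, hy, Nat.pair_unpair v⟩

theorem mem_oeval_comp {O : ℕ → ℕ} {n v : ℕ} : v ∈ oeval O (.comp f g) n ↔
    ∃ x, x ∈ oeval O g n ∧ v ∈ oeval O f x :=
  Part.mem_bind_iff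

theorem mem_oeval_prec {O : ℕ → ℕ} {n v : ℕ} : v ∈ oeval O (.prec f g) n ↔
    ∃ l : List ℕ, (l.getD n.unpair.2 0 = v ∧ l.getD 0 0 ∈ oeval O f n.unpair.1) ∧
      ∀ i < n.unpair.2,
        l.getD (i + 1) 0 ∈ oeval O g (Nat.pair n.unpair.1 (Nat.pair i (l.getD i 0))) :=
  mem_natRec_iff

theorem mem_oeval_rfind' {O : ℕ → ℕ} {n v : ℕ} : v ∈ oeval O (.rfind' f) n ↔
    ∃ x, x + n.unpair.2 = v ∧ 0 ∈ oeval O f (Nat.pair n.unpair.1 (x + n.unpair.2)) ∧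
      ∀ i < x, ∃ y, y ≠ 0 ∧ y ∈ oeval O f (Nat.pair n.unpair.1 (i + n.unpair.2)) := by
  refine (Part.mem_map_iff _).trans (exists_congr fun x => ?_)
  refine and_comm.trans (and_congr_right fun _ => Nat.mem_rfind.trans ?_)
  simp [and_comm]

/-- The graph of the functional coded by `c` is effectively open. -/
def EffOpenGraph (c : OCode) : Prop :=
  EffOpen fun (p : ℕ × ℕ) (O : ℕ → ℕ) => p.2 ∈ oeval O c p.1

theorem EffOpenGraph.comp {α : Type*} [Primcodable α] (hf : EffOpenGraph f) {a b : α → ℕ}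
    (ha : Primrec a) (hb : Primrec b) : EffOpen fun x O => b x ∈ oeval O f (a x) :=
  hf.reparam (Primrec.pair ha hb)

theorem effOpenGraph_pair (hf : EffOpenGraph f) (hg : EffOpenGraph g) :
    EffOpenGraph (.pair f g) :=
  ((hf.comp Primrec.fst (Primrec.fst.comp (Primrec.unpair.comp Primrec.snd))).and
    (hg.comp Primrec.fst (Primrec.snd.comp (Primrec.unpair.comp Primrec.snd)))).congr
    fun _ _ => by simpa only using mem_oeval_pair.symm

theorem effOpenGraph_comp (hf : EffOpenGraph f) (hg : EffOpenGraph g) :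
    EffOpenGraph (.comp f g) :=
  ((hg.comp (Primrec.fst.comp Primrec.fst) Primrec.snd).and
    (hf.comp Primrec.snd (Primrec.snd.comp Primrec.fst))).exists_param.congr
    fun _ _ => by simpa only using mem_oeval_comp.symm

theorem effOpenGraph_prec (hf : EffOpenGraph f) (hg : EffOpenGraph g) :
    EffOpenGraph (.prec f g) := by
  have hn : Primrec fun x : (ℕ × ℕ) × List ℕ => x.1.1.unpair :=
    Primrec.unpair.comp (Primrec.fst.comp Primrec.fst)
  have hget {β : Type} [Primcodable β] {e : β → List ℕ} {i : β → ℕ} (he : Primrec e)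
      (hi : Primrec i) : Primrec fun x => (e x).getD (i x) 0 := (Primrec.list_getD 0).comp he hi
  have hbase := hf.comp (Primrec.fst.comp hn) (hget Primrec.snd (Primrec.const 0))
  have hlast : PrimrecPred fun x : (ℕ × ℕ) × List ℕ => x.2.getD x.1.1.unpair.2 0 = x.1.2 :=
    Primrec.eq.comp (hget Primrec.snd (Primrec.snd.comp hn)) (Primrec.snd.comp Primrec.fst)
  have hstr : Primrec fun y : ((ℕ × ℕ) × List ℕ) × ℕ => y.1.2 := Primrec.snd.comp Primrec.fst
  have hstep := hg.comp (Primrec₂.natPair.comp (Primrec.fst.comp (hn.comp Primrec.fst))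
      (Primrec₂.natPair.comp Primrec.snd (hget hstr Primrec.snd)))
    (hget hstr (Primrec.succ.comp Primrec.snd))
  exact (((effOpen_of_param hlast).and hbase).and
    (hstep.forall_lt (Primrec.snd.comp hn))).exists_param.congr
    fun _ _ => by simpa only using mem_oeval_prec.symm

theorem effOpenGraph_rfind' (hf : EffOpenGraph f) : EffOpenGraph (.rfind' f) := by
  have hn : Primrec fun x : (ℕ × ℕ) × ℕ => x.1.1.unpair :=
    Primrec.unpair.comp (Primrec.fst.comp Primrec.fst)
  have hsum : Primrec fun x : (ℕ × ℕ) × ℕ => x.2 + x.1.1.unpair.2 :=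
    Primrec.nat_add.comp Primrec.snd (Primrec.snd.comp hn)
  have hlast : PrimrecPred fun x : (ℕ × ℕ) × ℕ => x.2 + x.1.1.unpair.2 = x.1.2 :=
    Primrec.eq.comp hsum (Primrec.snd.comp Primrec.fst)
  have harg : Primrec fun x : (ℕ × ℕ) × ℕ =>
      Nat.pair x.1.1.unpair.1 (x.2 + x.1.1.unpair.2) :=
    Primrec₂.natPair.comp (Primrec.fst.comp hn) hsum
  have hne : PrimrecPred fun y : (((ℕ × ℕ) × ℕ) × ℕ) × ℕ => y.2 ≠ 0 :=
    (Primrec.eq.comp Primrec.snd (Primrec.const 0)).not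
  have hbelow := ((effOpen_of_param hne).and (hf.comp (harg.comp (Primrec.pair
    (Primrec.fst.comp (Primrec.fst.comp Primrec.fst)) (Primrec.snd.comp Primrec.fst)))
    Primrec.snd)).exists_param
  exact ((effOpen_of_param hlast).and ((hf.comp harg (Primrec.const 0)).and
    (hbelow.forall_lt Primrec.snd))).exists_param.congr
    fun _ _ => by simpa only using mem_oeval_rfind'.symm

theorem effOpenGraph (c : OCode) : EffOpenGraph c := by
  have of_primrec {f : ℕ → ℕ} (hf : Primrec f) :
      EffOpen fun (p : ℕ × ℕ) (_ : ℕ → ℕ) => p.2 = f p.1 :=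
    effOpen_of_param (Primrec.eq.comp Primrec.snd (hf.comp Primrec.fst))
  induction c with
  | zero => exact (of_primrec (Primrec.const 0)).congr fun _ _ => Part.mem_some_iff.symm
  | succ => exact (of_primrec Primrec.succ).congr fun _ _ => Part.mem_some_iff.symm
  | left => exact (of_primrec (Primrec.fst.comp Primrec.unpair)).congr fun _ _ =>
      Part.mem_some_iff.symm
  | right => exact (of_primrec (Primrec.snd.comp Primrec.unpair)).congr fun _ _ =>
      Part.mem_some_iff.symm
  | oracle => exact (effOpen_letter_eq Primrec.fst Primrec.snd).congr fun _ _ =>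
      eq_comm.trans Part.mem_some_iff.symm
  | pair f g hf hg => exact effOpenGraph_pair hf hg
  | comp f g hf hg => exact effOpenGraph_comp hf hg
  | prec f g hf hg => exact effOpenGraph_prec hf hg
  | rfind' f hf => exact effOpenGraph_rfind' hf

end OracleComputations

/-! ### Relative computability -/

section RelativeComputability

variable {O f g : ℕ → ℕ} {C : Set ℕ}

theorem exists_oeval_eq_eval (O : ℕ → ℕ) (c : Nat.Partrec.Code) :
    ∃ d : OCode, oeval O d = c.eval := by
  induction c with
  | zero => exact ⟨.zero, rfl⟩
  | succ => exact ⟨.succ, rfl⟩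
  | left => exact ⟨.left, rfl⟩
  | right => exact ⟨.right, rfl⟩
  | pair _ _ iha ihb =>
    obtain ⟨⟨a, ha⟩, b, hb⟩ := And.intro iha ihb
    exact ⟨.pair a b, by simp only [oeval, Nat.Partrec.Code.eval, ha, hb]; rfl⟩
  | comp _ _ iha ihb =>
    obtain ⟨⟨a, ha⟩, b, hb⟩ := And.intro iha ihb
    exact ⟨.comp a b, by simp only [oeval, Nat.Partrec.Code.eval, ha, hb]; rfl⟩
  | prec _ _ iha ihb =>
    obtain ⟨⟨a, ha⟩, b, hb⟩ := And.intro iha ihb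
    exact ⟨.prec a b, by simp only [oeval, Nat.Partrec.Code.eval, ha, hb]; rfl⟩
  | rfind' _ iha =>
    obtain ⟨a, ha⟩ := iha
    exact ⟨.rfind' a, by simp only [oeval, Nat.Partrec.Code.eval, ha]; rfl⟩

theorem recIn_of_primrec (O : ℕ → ℕ) (hf : Primrec f) : RecIn O f := by
  obtain ⟨c, hc⟩ := Nat.Partrec.Code.exists_code.1 (Partrec.nat_iff.1 hf.to_comp)
  obtain ⟨d, hd⟩ := exists_oeval_eq_eval O c
  exact ⟨d, fun n => by rw [hd, hc]; rfl⟩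

theorem exists_oeval_eq_oeval (h : RecIn O g) (c : OCode) :
    ∃ d : OCode, oeval O d = oeval g c := by
  induction c with
  | zero => exact ⟨.zero, rfl⟩
  | succ => exact ⟨.succ, rfl⟩
  | left => exact ⟨.left, rfl⟩
  | right => exact ⟨.right, rfl⟩
  | oracle => exact h.imp fun _ hd => funext hd
  | pair _ _ iha ihb =>
    obtain ⟨⟨a, ha⟩, b, hb⟩ := And.intro iha ihb
    exact ⟨.pair a b, by simp only [oeval, ha, hb]; rfl⟩
  | comp _ _ iha ihb =>
    obtain ⟨⟨a, ha⟩, b, hb⟩ := And.intro iha ihb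
    exact ⟨.comp a b, by simp only [oeval, ha, hb]; rfl⟩
  | prec _ _ iha ihb =>
    obtain ⟨⟨a, ha⟩, b, hb⟩ := And.intro iha ihb
    exact ⟨.prec a b, by simp only [oeval, ha, hb]; rfl⟩
  | rfind' _ iha =>
    obtain ⟨a, ha⟩ := iha
    exact ⟨.rfind' a, by simp only [oeval, ha]; rfl⟩

/-- The sequence of the codes of the letters of `z`, an oracle in the sense of `oeval`. -/
def codes {L : Type} [Primcodable L] (z : ℕ → L) : ℕ → ℕ := fun n => Encodable.encode (z n)

namespace RecIn

theorem trans (hg : RecIn O g) (hf : RecIn g f) : RecIn O f := by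
  obtain ⟨c, hc⟩ := hf
  obtain ⟨d, hd⟩ := exists_oeval_eq_oeval hg c
  exact ⟨d, fun n => by rw [hd, hc]⟩

theorem oracle (O : ℕ → ℕ) : RecIn O O := ⟨.oracle, fun _ => rfl⟩

theorem comp (hf : RecIn O f) (hg : RecIn O g) : RecIn O fun n => f (g n) := by
  obtain ⟨⟨c, hc⟩, d, hd⟩ := And.intro hf hg
  exact ⟨.comp c d, fun n => Part.eq_some_iff.2
    (mem_oeval_comp.2 ⟨g n, by simp [hd], by simp [hc]⟩)⟩

theorem pair (hf : RecIn O f) (hg : RecIn O g) : RecIn O fun n => Nat.pair (f n) (g n) := by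
  obtain ⟨⟨c, hc⟩, d, hd⟩ := And.intro hf hg
  exact ⟨.pair c d, fun n => Part.eq_some_iff.2 (mem_oeval_pair.2 (by simp [hc, hd]))⟩

theorem prec (hg : RecIn O g) (hf : ∀ n, f (n + 1) = g (Nat.pair n (f n))) : RecIn O f := by
  obtain ⟨b, hb⟩ := recIn_of_primrec O (Primrec.const (f 0))
  obtain ⟨c, hc⟩ := hg.comp (recIn_of_primrec O (Primrec.snd.comp Primrec.unpair))
  obtain ⟨d, hd⟩ := recIn_of_primrec O (Primrec₂.natPair.comp (Primrec.const 0) Primrec.id)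
  refine ⟨.comp (.prec b c) d, fun n => Part.eq_some_iff.2 (mem_oeval_comp.2
    ⟨Nat.pair 0 n, by simp [hd], mem_oeval_prec.2 ⟨seg f (n + 1), ⟨?_, ?_⟩, fun i hi => ?_⟩⟩)⟩
  · simp
  · simp [hb]
  · rw [Nat.unpair_pair] at hi
    rw [getD_seg f (by omega), getD_seg f (by omega), hc]
    simp [hf]

theorem find (hf : RecIn O f) (h : ∀ n, ∃ k, f (Nat.pair n k) = 0) :
    RecIn O fun n => Nat.find (h n) := by
  obtain ⟨c, hc⟩ := hf
  obtain ⟨d, hd⟩ := recIn_of_primrec O (Primrec₂.natPair.comp Primrec.id (Primrec.const 0))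
  refine ⟨.comp (.rfind' c) d, fun n => Part.eq_some_iff.2 (mem_oeval_comp.2
    ⟨Nat.pair n 0, by simp [hd], mem_oeval_rfind'.2 ⟨Nat.find (h n), ?_, ?_, fun i hi => ?_⟩⟩)⟩
  · simp
  · simpa [hc, eq_comm] using Nat.find_spec (h n)
  · exact ⟨_, Nat.find_min (h n) hi, by simp [hc]⟩

theorem encode_seg (O : ℕ → ℕ) : RecIn O fun n => Encodable.encode (seg O n) := by
  let snoc (x : ℕ) : ℕ := Encodable.encode
    (((Encodable.decode x.unpair.2).getD [] : List ℕ) ++ [x.unpair.1])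
  have hsnoc : Primrec snoc := Primrec.encode.comp (Primrec.list_append.comp
    (Primrec.option_getD.comp (Primrec.decode.comp (Primrec.snd.comp Primrec.unpair))
      (Primrec.const []))
    (Primrec.list_cons.comp (Primrec.fst.comp Primrec.unpair) (Primrec.const [])))
  have hfst := recIn_of_primrec O (Primrec.fst.comp Primrec.unpair)
  have hsnd := recIn_of_primrec O (Primrec.snd.comp Primrec.unpair)
  exact prec ((recIn_of_primrec O hsnoc).comp (((oracle O).comp hfst).pair hsnd)) fun n => by
    simp [snoc, seg_succ]

theorem joinF_right (h : RecIn g f) : RecIn (joinF O g) f := by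
  have hodd : RecIn (joinF O g) fun n => joinF O g (2 * n + 1) :=
    (oracle _).comp (recIn_of_primrec _
      (Primrec.succ.comp (Primrec.nat_mul.comp (Primrec.const 2) Primrec.id)))
  refine trans ?_ h
  simpa [joinF, Nat.add_mod, Nat.mul_add_div] using hodd

theorem joinF (hf : RecIn O f) (hg : RecIn O g) : RecIn O (joinF f g) := by
  have hhalf := recIn_of_primrec O (Primrec.nat_div.comp Primrec.id (Primrec.const 2))
  have hcases : Primrec fun x : ℕ =>
      if x.unpair.1 % 2 = 0 then x.unpair.2.unpair.1 else x.unpair.2.unpair.2 :=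
    Primrec.ite (Primrec.eq.comp (Primrec.nat_mod.comp (Primrec.fst.comp Primrec.unpair)
      (Primrec.const 2)) (Primrec.const 0))
      (Primrec.fst.comp (Primrec.unpair.comp (Primrec.snd.comp Primrec.unpair)))
      (Primrec.snd.comp (Primrec.unpair.comp (Primrec.snd.comp Primrec.unpair)))
  have h := (recIn_of_primrec O hcases).comp ((recIn_of_primrec O Primrec.id).pair
    ((hf.comp hhalf).pair (hg.comp hhalf)))
  simp only [id_eq, Nat.unpair_pair] at h
  exact h

theorem sigmaIn_compl {A : Set ℕ} (hA : RecIn O (chi A)) : SigmaIn O Aᶜ := by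
  obtain ⟨c, hc⟩ := hA.comp (recIn_of_primrec O (Primrec.fst.comp Primrec.unpair))
  obtain ⟨d, hd⟩ := recIn_of_primrec O (Primrec₂.natPair.comp Primrec.id (Primrec.const 0))
  refine ⟨.comp (.rfind' c) d, fun n => ?_⟩
  have hchi : n ∈ Aᶜ ↔ 0 = chi A n := by simp [chi, eq_comm (a := 0)]
  simp only [Part.dom_iff_mem, mem_oeval_comp, mem_oeval_rfind', hc, hd, Part.mem_some_iff,
    id_eq, exists_eq_left, Nat.unpair_pair, hchi]
  exact ⟨fun h => ⟨0, 0, rfl, h, nofun⟩, fun ⟨_, _, _, h, _⟩ => h⟩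

theorem of_letter {L : Type} [Primcodable L] {z : ℕ → L} {k : ℕ → ℕ} (hk : Primrec k)
    {h : ℕ → L → ℕ} (hh : Primrec₂ h) :
    RecIn (codes z) fun n => h n (z (k n)) := by
  have hread : Primrec fun x : ℕ =>
      ((Encodable.decode (α := L) x.unpair.2).map fun y => h x.unpair.1 y).getD 0 :=
    Primrec.option_getD.comp (Primrec.option_map
      (Primrec.decode.comp (Primrec.snd.comp Primrec.unpair))
      (hh.comp (Primrec.fst.comp (Primrec.unpair.comp Primrec.fst)) Primrec.snd)) (Primrec.const 0)
  simpa [codes] using (recIn_of_primrec _ hread).comp ((recIn_of_primrec _ Primrec.id).pair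
    ((oracle (codes z)).comp (recIn_of_primrec _ hk)))

end RecIn

variable {L : Type} [Primcodable L]

/-- The sequence `z` computes the set `C`. Letters of `z` range over an arbitrary coded type, so
that several oracles can be handled as one sequence of tuples. -/
def Computes (z : ℕ → L) (C : Set ℕ) : Prop :=
  ∃ U : ℕ × Bool → (ℕ → L) → Prop, EffOpen U ∧ ∀ n v, U (n, v) z ↔ (v = true ↔ n ∈ C)

theorem Computes.of_codes {z : ℕ → L} (hC : Computes (codes z) C) : Computes z C := by
  obtain ⟨U, hU, hUC⟩ := hC
  exact ⟨_, hU.map Primrec.id (g := fun _ x => Encodable.encode x)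
    (Primrec.encode.comp Primrec.snd), hUC⟩

theorem chi_eq_iff {n : ℕ} {v : Bool} : chi C n = cond v 1 0 ↔ (v = true ↔ n ∈ C) := by
  by_cases h : n ∈ C <;> cases v <;> simp [chi, h]

theorem recIn_chi_of_exists_iff {f g : ℕ → ℕ} (hf : RecIn O f) (hg : RecIn O g)
    (hfC : ∀ n, n ∈ C ↔ ∃ k, f (Nat.pair n k) = 0)
    (hgC : ∀ n, n ∉ C ↔ ∃ k, g (Nat.pair n k) = 0) : RecIn O (chi C) := by
  have hmul : Primrec fun x : ℕ => x.unpair.1 * x.unpair.2 :=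
    Primrec.nat_mul.comp (Primrec.fst.comp Primrec.unpair) (Primrec.snd.comp Primrec.unpair)
  have htest : Primrec fun x : ℕ => if x = 0 then 1 else 0 :=
    Primrec.ite (Primrec.eq.comp Primrec.id (Primrec.const 0)) (Primrec.const 1) (Primrec.const 0)
  have hex (n : ℕ) : ∃ k, f (Nat.pair n k) * g (Nat.pair n k) = 0 := by
    simpa only [mul_eq_zero, exists_or, ← hfC, ← hgC] using em (n ∈ C)
  have hstage : RecIn O fun n => Nat.find (hex n) := by
    simpa using ((recIn_of_primrec O hmul).comp (hf.pair hg)).find (by simpa using hex)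
  have hchi : chi C = fun n => if f (Nat.pair n (Nat.find (hex n))) = 0 then 1 else 0 := by
    funext n
    split_ifs with h
    · exact (chi_eq_iff (v := true)).2 (by simpa [hfC] using ⟨_, h⟩)
    · exact (chi_eq_iff (v := false)).2
        (by simpa [hgC] using ⟨_, (mul_eq_zero.1 (Nat.find_spec (hex n))).resolve_left h⟩)
  rw [hchi]
  exact ((recIn_of_primrec O htest).comp hf).comp
    ((recIn_of_primrec O Primrec.id).pair hstage)

theorem computes_iff_recIn : Computes O C ↔ RecIn O (chi C) := by
  classical
  constructor
  · rintro ⟨U, hU, hUC⟩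
    obtain ⟨R, hR, -, hUR⟩ := hU.exists_primrecPred
    have hstage (v : Bool) : RecIn O fun x => if R ((x.unpair.1, v), seg O x.unpair.2) then 0 else 1
        := by
      have hdec : Primrec fun x : ℕ =>
          if R ((x.unpair.1, v), (Encodable.decode x.unpair.2).getD []) then 0 else 1 :=
        Primrec.ite (hR.comp (Primrec.pair
          (Primrec.pair (Primrec.fst.comp Primrec.unpair) (Primrec.const v))
          (Primrec.option_getD.comp (Primrec.decode.comp (Primrec.snd.comp Primrec.unpair))
            (Primrec.const [])))) (Primrec.const 0) (Primrec.const 1)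
      have hfst := recIn_of_primrec O (Primrec.fst.comp Primrec.unpair)
      have hsnd := recIn_of_primrec O (Primrec.snd.comp Primrec.unpair)
      simpa using (recIn_of_primrec O hdec).comp (hfst.pair ((RecIn.encode_seg O).comp hsnd))
    exact recIn_chi_of_exists_iff (hstage true) (hstage false)
      (fun n => by simp [← hUR, hUC]) (fun n => by simp [← hUR, hUC])
  · rintro ⟨c, hc⟩
    exact ⟨_, (effOpenGraph c).comp (b := fun p : ℕ × Bool => cond p.2 1 0) Primrec.fst
      (Primrec.cond Primrec.snd (Primrec.const 1) (Primrec.const 0)), fun n v => by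
      rw [hc, Part.mem_some_iff, eq_comm, chi_eq_iff]⟩

theorem effOpen_oeval_dom (c : OCode) : EffOpen fun n (O : ℕ → ℕ) => (oeval O c n).Dom :=
  (effOpenGraph c).exists_param.congr fun _ _ => by simpa only using Part.dom_iff_mem.symm

end RelativeComputability

/-! ### Forcing with left-full effectively closed classes -/

section Forcing

/-- Left-fullness of a class of pairs of sequences below the string `ρ`: every sequence extending
`ρ` is the first component of a pair in the class. -/
def LeftFullOn {A B : Type} (P : Set ((ℕ → A) × (ℕ → B))) (ρ : List A) : Prop :=
  ∀ X, ExtendsL X ρ → ∃ Y, (X, Y) ∈ P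

/-- A pair of sequences joined to an oracle, letter by letter. -/
def withOracle {L A B : Type} (O : ℕ → L) (p : (ℕ → A) × (ℕ → B)) : ℕ → (L × A) × B :=
  fun n => ((O n, p.1 n), p.2 n)

/-- Forcing conditions: a class of pairs of sequences, and a stem for their first components. -/
structure Condition (A B : Type) where
  cls : Set ((ℕ → A) × (ℕ → B))
  stem : List A

variable {L A B : Type}

theorem LeftFullOn.mono {P Q : Set ((ℕ → A) × (ℕ → B))} {ρ ρ' : List A} (h : LeftFullOn P ρ)
    (hPQ : P ⊆ Q) (hρ : ρ <+: ρ') : LeftFullOn Q ρ' := fun X hX =>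
  (h X (hX.of_prefix hρ)).imp fun _ hY => hPQ hY

namespace Condition

variable {c c' : Condition A B}

instance : Preorder (Condition A B) where
  le c' c := c'.cls ⊆ c.cls ∧ c.stem <+: c'.stem
  le_refl _ := ⟨subset_rfl, List.prefix_rfl⟩
  le_trans _ _ _ h h' := ⟨h.1.trans h'.1, h'.2.trans h.2⟩

/-- The pairs of sequences that satisfy a condition. -/
def branches (c : Condition A B) : Set ((ℕ → A) × (ℕ → B)) :=
  {p ∈ c.cls | ExtendsL p.1 c.stem}

theorem branches_mono (h : c' ≤ c) : c'.branches ⊆ c.branches :=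
  fun _ hp => ⟨h.1 hp.1, hp.2.of_prefix h.2⟩

end Condition

variable [Primcodable L] [Primcodable A] [Primcodable B] {O : ℕ → L} {C : Set ℕ}

/-- Classes of pairs of sequences that are effectively closed (`Π⁰₁`) relative to the oracle `O`. -/
def EffClosed (O : ℕ → L) (P : Set ((ℕ → A) × (ℕ → B))) : Prop :=
  ∃ U : Unit → (ℕ → (L × A) × B) → Prop, EffOpen U ∧ ∀ p, p ∈ P ↔ ¬U () (withOracle O p)

theorem effClosed_of_effOpen {α M : Type} [Primcodable α] [Primcodable M]
    {U : α → (ℕ → M) → Prop} (hU : EffOpen U) (a : α) {g : ℕ → (L × A) × B → M} (hg : Primrec₂ g) :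
    EffClosed O {p | ¬U a fun n => g n (withOracle O p n)} :=
  ⟨_, hU.map (Primrec.const a) hg, fun _ => Iff.rfl⟩

theorem EffClosed.inter {P Q : Set ((ℕ → A) × (ℕ → B))} (hP : EffClosed O P)
    (hQ : EffClosed O Q) : EffClosed O (P ∩ Q) := by
  obtain ⟨U, hU, hPU⟩ := hP
  obtain ⟨V, hV, hQV⟩ := hQ
  exact ⟨_, hU.or hV, fun p => by rw [Set.mem_inter_iff, hPU, hQV, not_or]⟩

/-- The conditions of the forcing relative to the oracle `O`: left-full effectively closed
classes. -/
structure Condition.Valid (O : ℕ → L) (c : Condition A B) : Prop where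
  effClosed : EffClosed O c.cls
  leftFullOn : LeftFullOn c.cls c.stem

/-- Every valid condition below `c` has a valid extension all of whose branches lie in `S`. -/
def DenseBelow (O : ℕ → L) (c : Condition A B) (S : Set ((ℕ → A) × (ℕ → B))) : Prop :=
  ∀ c' ≤ c, c'.Valid O → ∃ c'' ≤ c', c''.Valid O ∧ c''.branches ⊆ S

theorem EffOpen.not_leftFullOn [Finite A] [Inhabited A] [Finite B] [Inhabited B] {α : Type}
    [Primcodable α] {U : α → (ℕ → (L × A) × B) → Prop} (hU : EffOpen U) (ρ : List A) :
    EffOpen fun a (O : ℕ → L) => ¬LeftFullOn {p | ¬U a (withOracle O p)} ρ := by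
  have hoverlay : Primrec₂ fun (i : ℕ) (x : L × A) => (x.1, ρ.getD i x.2) :=
    Primrec.pair (Primrec.fst.comp Primrec.snd)
      ((primrec₂_getD ρ).comp Primrec.fst (Primrec.snd.comp Primrec.snd))
  refine (hU.forall_seq.map Primrec.id hoverlay).exists_seq.congr fun a O => ?_
  simp only [LeftFullOn, not_forall, not_exists, Set.mem_ofPred_eq, not_not]
  constructor
  · rintro ⟨X, hX⟩
    exact ⟨overlay ρ X, extendsL_overlay ρ X, hX⟩
  · rintro ⟨X, hXρ, hX⟩
    refine ⟨X, fun Y => ?_⟩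
    have hY := hX Y
    rwa [← hXρ.overlay_eq] at hY

theorem EffOpen.exists_stem_forall [Finite B] [Inhabited B] {α : Type} [Primcodable α]
    {U : α → (ℕ → (L × A) × B) → Prop} (hU : EffOpen U) {a : α} {ρ : List A}
    (h : ¬LeftFullOn {p | ¬U a (withOracle O p)} ρ) :
    ∃ ρ', ρ <+: ρ' ∧ ∀ p, ExtendsL p.1 ρ' → U a (withOracle O p) := by
  simp only [LeftFullOn, not_forall, not_exists, Set.mem_ofPred_eq, not_not] at h
  obtain ⟨X, hXρ, hX⟩ := h
  obtain ⟨k, hk⟩ := hU.forall_seq.exists_nhd (z := fun i => (O i, X i)) hX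
  refine ⟨seg X (max ρ.length k), hXρ.prefix_seg (le_max_left _ _), fun p hp => ?_⟩
  exact hk (fun i => (O i, p.1 i))
    (fun i hi => by rw [extendsL_seg.1 hp i (lt_max_of_lt_right hi)]) p.2

theorem denseBelow_not_computes [Finite A] [Inhabited A] [Finite B] [Inhabited B]
    (hO : ¬Computes O C) (c : Condition A B) {U : ℕ × Bool → (ℕ → (L × A) × B) → Prop}
    (hU : EffOpen U) :
    DenseBelow O c {p | ¬∀ n v, U (n, v) (withOracle O p) ↔ (v = true ↔ n ∈ C)} := by
  rintro c' - ⟨⟨V, hV, hcV⟩, hc'⟩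
  have hVU : EffOpen fun a z => V () z ∨ U a z := (hV.reparam (Primrec.const ())).or hU
  let P (a : ℕ × Bool) : Set ((ℕ → A) × (ℕ → B)) :=
    {p | ¬(V () (withOracle O p) ∨ U a (withOracle O p))}
  obtain ⟨n, v, hnv⟩ : ∃ n v, ¬(¬LeftFullOn (P (n, v)) c'.stem ↔ (v = true ↔ n ∈ C)) := by
    by_contra! hcomp
    exact hO ⟨_, hVU.not_leftFullOn c'.stem, hcomp⟩
  by_cases hfull : LeftFullOn (P (n, v)) c'.stem
  · have hwrong : v = true ↔ n ∈ C := by tauto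
    refine ⟨⟨P (n, v), c'.stem⟩, ⟨fun p hp => (hcV p).2 fun h => hp (Or.inl h), List.prefix_rfl⟩,
      ⟨effClosed_of_effOpen hVU (n, v) (g := fun _ x => x) Primrec.snd, hfull⟩, ?_⟩
    exact fun p hp hall => hp.1 (Or.inr ((hall n v).2 hwrong))
  · obtain ⟨ρ', hρ', hforce⟩ := hVU.exists_stem_forall hfull
    refine ⟨⟨c'.cls, ρ'⟩, ⟨subset_rfl, hρ'⟩, ⟨⟨V, hV, hcV⟩, hc'.mono subset_rfl hρ'⟩, ?_⟩
    intro p hp hall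
    have hwrong : v = true ↔ n ∈ C :=
      (hall n v).1 ((hforce p hp.2).resolve_left ((hcV p).1 hp.1))
    exact hnv ⟨fun _ => hwrong, fun _ => hfull⟩

theorem denseBelow_imp_leftFullOn [Finite B] [Inhabited B] (c : Condition A B)
    {Q : Set ((ℕ → A) × (ℕ → B))} (hQ : EffClosed O Q) :
    DenseBelow O c {p | p ∈ Q → ∃ ρ, c.stem <+: ρ ∧ LeftFullOn (c.cls ∩ Q) ρ} := by
  intro c' hc' hvalid
  by_cases hfull : LeftFullOn (c'.cls ∩ Q) c'.stem
  · exact ⟨c', le_rfl, hvalid, fun _ _ _ => ⟨c'.stem, hc'.2,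
      hfull.mono (Set.inter_subset_inter_left Q hc'.1) List.prefix_rfl⟩⟩
  · obtain ⟨U, hU, hQU⟩ := hvalid.effClosed.inter hQ
    rw [show c'.cls ∩ Q = {p | ¬U () (withOracle O p)} from Set.ext hQU] at hfull
    obtain ⟨ρ, hρ, hforce⟩ := hU.exists_stem_forall hfull
    exact ⟨⟨c'.cls, ρ⟩, ⟨subset_rfl, hρ⟩,
      ⟨hvalid.effClosed, hvalid.leftFullOn.mono subset_rfl hρ⟩,
      fun p hp hpQ => ((hQU p).1 ⟨hp.1, hpQ⟩ (hforce p hp.2)).elim⟩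

theorem exists_mem_branches_of_antitone [Finite A] [Inhabited A] [Finite B]
    {c : ℕ → Condition A B} (hc : Antitone c) (hvalid : ∀ n, (c n).Valid O) :
    ∃ p, ∀ n, p ∈ (c n).branches := by
  let _ : TopologicalSpace (A × B) := ⊥
  have : DiscreteTopology (A × B) := ⟨rfl⟩
  let unzip (w : ℕ → A × B) : (ℕ → A) × (ℕ → B) := (fun i => (w i).1, fun i => (w i).2)
  have hclosed (n : ℕ) : IsClosed (unzip ⁻¹' (c n).branches) := by
    refine isOpen_compl_iff.1 (isOpen_of_nhd fun w hw => ?_)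
    obtain ⟨U, hU, hcU⟩ := (hvalid n).effClosed
    by_cases hcls : unzip w ∈ (c n).cls
    · refine ⟨(c n).stem.length, fun w' hw' hb => hw ⟨hcls, ?_⟩⟩
      exact fun i => (congrArg Prod.fst (hw' i i.2)).symm.trans (hb.2 i)
    · rw [hcU, not_not] at hcls
      obtain ⟨k, hk⟩ := hU.exists_nhd hcls
      refine ⟨k, fun w' hw' hb => (hcU _).1 hb.1 (hk _ fun i hi => ?_)⟩
      simp only [withOracle, unzip, hw' i hi]
  obtain ⟨w, hw⟩ := IsCompact.nonempty_iInter_of_sequence_nonempty_isCompact_isClosed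
    (fun n => unzip ⁻¹' (c n).branches)
    (fun n => Set.preimage_mono (Condition.branches_mono (hc n.le_succ)))
    (fun n => by
      have hstem := extendsL_overlay (c n).stem default
      obtain ⟨Y, hY⟩ := (hvalid n).leftFullOn _ hstem
      exact ⟨fun i => (overlay (c n).stem default i, Y i), hY, hstem⟩)
    (hclosed 0).isCompact hclosed
  exact ⟨unzip w, fun n => Set.mem_iInter.1 hw n⟩

theorem exists_mem_branches_of_denseBelow [Finite A] [Inhabited A] [Finite B] {ι : Type*}
    [Countable ι] {c : Condition A B} (hc : c.Valid O) {S : ι → Set ((ℕ → A) × (ℕ → B))}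
    (hS : ∀ i, DenseBelow O c (S i)) : ∃ p ∈ c.branches, ∀ i, p ∈ S i := by
  let Below := {c' : Condition A B // c' ≤ c ∧ c'.Valid O}
  rcases isEmpty_or_nonempty ι with hι | hι
  · obtain ⟨p, hp⟩ := exists_mem_branches_of_antitone (antitone_const (c := c)) fun _ : ℕ => hc
    exact ⟨p, hp 0, hι.elim⟩
  obtain ⟨e, he⟩ := exists_surjective_nat ι
  choose next hnext_le hnext_valid hnext using fun i (d : Below) => hS i d.1 d.2.1 d.2.2
  let d (n : ℕ) : Below := n.rec ⟨c, le_rfl, hc⟩ fun n d =>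
    ⟨next (e n) d, (hnext_le (e n) d).trans d.2.1, hnext_valid (e n) d⟩
  obtain ⟨p, hp⟩ := exists_mem_branches_of_antitone (c := fun n => (d n).1)
    (antitone_nat_of_succ_le fun n => hnext_le (e n) (d n)) fun n => (d n).2.2
  refine ⟨p, hp 0, fun i => ?_⟩
  obtain ⟨n, rfl⟩ := he i
  exact hnext (e n) (d n) (hp (n + 1))

theorem Condition.Valid.exists_branch_not_computes [Finite A] [Inhabited A] [Finite B]
    [Inhabited B] (hO : ¬Computes O C) {c : Condition A B} (hc : c.Valid O) {ι : Type*}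
    [Countable ι] {Q : ι → Set ((ℕ → A) × (ℕ → B))} (hQ : ∀ i, EffClosed O (Q i)) :
    ∃ p ∈ c.branches, ¬Computes (withOracle O p) C ∧
      ∀ i, p ∈ Q i → ∃ ρ, c.stem <+: ρ ∧ LeftFullOn (c.cls ∩ Q i) ρ := by
  have := countable_rePred (α := (ℕ × Bool) × List ((L × A) × B))
  let noReduction (W : (ℕ × Bool) × List ((L × A) × B) → Prop) : Set ((ℕ → A) × (ℕ → B)) :=
    {p | ¬∀ n v, (∃ k, W ((n, v), seg (withOracle O p) k)) ↔ (v = true ↔ n ∈ C)}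
  obtain ⟨p, hp, hreq⟩ := exists_mem_branches_of_denseBelow hc
    (S := Sum.elim (fun W : {W : (ℕ × Bool) × List ((L × A) × B) → Prop // REPred W} =>
      noReduction W) fun i => {p | p ∈ Q i → ∃ ρ, c.stem <+: ρ ∧ LeftFullOn (c.cls ∩ Q i) ρ})
    (Sum.rec (fun W => denseBelow_not_computes hO c ⟨W.1, W.2, fun _ _ => Iff.rfl⟩)
      fun i => denseBelow_imp_leftFullOn c (hQ i))
  refine ⟨p, hp, ?_, fun i => hreq (Sum.inr i)⟩
  rintro ⟨U, ⟨W, hW, hUW⟩, hUC⟩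
  exact hreq (Sum.inl ⟨W, hW⟩) fun n v => (hUW _ _).symm.trans (hUC n v)

end Forcing

/-! ### Cross constraints -/

section CrossConstraint

section OracleClasses

variable {L A B A' B' : Type} [Primcodable L] [Primcodable A] [Primcodable B] [Primcodable A']
  [Primcodable B'] {O : ℕ → L}

theorem effOpen_exists_ge_not [Finite B] [Finite B'] (D : B → B' → Prop) (m : ℕ) :
    EffOpen fun (_ : Unit) (z : ℕ → (((L × A) × B) × A') × B') =>
      ∃ k, m ≤ k ∧ ¬D (z k).1.1.2 (z k).2 := by
  classical
  have hD : PrimrecPred fun x : B × B' => ¬D x.1 x.2 := ⟨inferInstance, Primrec.dom_finite _⟩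
  refine effOpen_exists_letter (D := fun x : ℕ × (((L × A) × B) × A') × B' =>
    m ≤ x.1 ∧ ¬D x.2.1.1.2 x.2.2) ?_
  exact (Primrec.nat_le.comp (Primrec.const m) Primrec.fst).and (hD.comp (Primrec.pair
    (Primrec.snd.comp (Primrec.fst.comp (Primrec.fst.comp Primrec.snd)))
    (Primrec.snd.comp Primrec.snd)))

theorem effClosed_forall_ge [Finite B] [Finite B'] (D : B → B' → Prop) (m : ℕ)
    (p : (ℕ → A) × (ℕ → B)) :
    EffClosed (withOracle O p) {q : (ℕ → A') × (ℕ → B') | ∀ k ≥ m, D (p.2 k) (q.2 k)} :=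
  ⟨_, effOpen_exists_ge_not D m, fun _ => by simp [withOracle]⟩

theorem EffClosed.withOracle {P : Set ((ℕ → A') × (ℕ → B'))} (hP : EffClosed O P)
    (p : (ℕ → A) × (ℕ → B)) : EffClosed (withOracle O p) P := by
  obtain ⟨U, hU, hPU⟩ := hP
  have hfst : Primrec fun x : ℕ × (((L × A) × B) × A') × B' => x.2.1 :=
    Primrec.fst.comp Primrec.snd
  have hproj : Primrec₂ fun (_ : ℕ) (x : (((L × A) × B) × A') × B') =>
      ((x.1.1.1.1, x.1.2), x.2) :=
    Primrec.pair (Primrec.pair (Primrec.fst.comp (Primrec.fst.comp (Primrec.fst.comp hfst)))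
      (Primrec.snd.comp hfst)) (Primrec.snd.comp Primrec.snd)
  exact ⟨_, hU.map Primrec.id hproj, hPU⟩

theorem EffOpen.effClosed_leftFullOn [Finite A'] [Inhabited A'] [Finite B'] [Inhabited B']
    {U : Unit → (ℕ → (((L × A) × B) × A') × B') → Prop} (hU : EffOpen U) (ρ : List A') :
    EffClosed O {p | LeftFullOn {q | ¬U () (Paper.withOracle (Paper.withOracle O p) q)} ρ} :=
  ⟨_, hU.not_leftFullOn ρ, fun _ => by simp⟩

end OracleClasses

/-- The sequence that extends `τ` and after it avoids the letters of `X`, the sequence `W` choosing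
between the two remaining letters. -/
def avoid (τ : List (Fin 3)) (X : ℕ → Fin 3) (W : ℕ → Fin 2) : ℕ → Fin 3 :=
  overlay τ fun n => (X n).succAbove (W n)

theorem extendsL_avoid (τ : List (Fin 3)) (X : ℕ → Fin 3) (W : ℕ → Fin 2) :
    ExtendsL (avoid τ X W) τ := extendsL_overlay τ _

theorem avoid_of_le {τ : List (Fin 3)} {n : ℕ} (h : τ.length ≤ n) (X : ℕ → Fin 3)
    (W : ℕ → Fin 2) : avoid τ X W n = (X n).succAbove (W n) := overlay_of_le _ h

theorem exists_avoid_eq {τ : List (Fin 3)} {X Z : ℕ → Fin 3} (hZ : ExtendsL Z τ)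
    (hXZ : ∀ n ≥ τ.length, Z n ≠ X n) : ∃ W, avoid τ X W = Z := by
  choose! W hW using fun n hn => Fin.exists_succAbove_eq (hXZ n hn)
  refine ⟨W, ?_⟩
  conv_rhs => rw [← hZ.overlay_eq]
  funext n
  rcases lt_or_ge n τ.length with h | h
  · rw [avoid, overlay_of_lt _ h 0, overlay_of_lt _ h 0]
  · rw [avoid_of_le h, overlay_of_le _ h, hW n h]

theorem primrec₂_getD_succAbove (τ : List (Fin 3)) :
    Primrec₂ fun n (x : Fin 3 × Fin 2) => τ.getD n (x.1.succAbove x.2) := by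
  have hsuccAbove : Primrec fun x : Fin 3 × Fin 2 => x.1.succAbove x.2 := Primrec.dom_finite _
  exact (primrec₂_getD τ).comp Primrec.fst (hsuccAbove.comp Primrec.snd)

/-- The string that follows `τ` and then differs from `τ'` at each place. -/
def dodge (τ τ' : List (Fin 3)) : List (Fin 3) :=
  seg (fun n => τ.getD n (τ'.getD n 0 + 1)) (max τ.length τ'.length)

theorem prefix_dodge (τ τ' : List (Fin 3)) : τ <+: dodge τ τ' := by
  refine ExtendsL.prefix_seg (extendsL_iff_getElem.2 fun n hn => ?_) (le_max_left _ _)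
  simp [hn]

theorem exists_avoid_ne_of_dodge {τ τ' : List (Fin 3)} {Z : ℕ → Fin 3}
    (hZ : ExtendsL Z (dodge τ τ')) (X : ℕ → Fin 3) :
    ∃ W, ∀ n ≥ τ.length, Z n ≠ avoid τ' X W n := by
  have hchoice (x z : Fin 3) : ∃ w : Fin 2, z ≠ x.succAbove w := by decide +revert
  choose W hW using fun n => hchoice (X n) (Z n)
  refine ⟨W, fun n hn => ?_⟩
  rcases lt_or_ge n τ'.length with h | h
  · rw [extendsL_seg.1 hZ n (lt_max_of_lt_right h), List.getD_eq_default _ _ hn, avoid,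
      overlay_of_lt _ h 0]
    generalize τ'.getD n 0 = x
    decide +revert
  · rw [avoid_of_le h]
    exact hW n

variable {r : ℕ}

/-- The pairs `(W, Y)` for which `avoid τ X W` and `Y` form a pair in the class `P`. -/
def avoiding (P : Set ((ℕ → Fin 3) × (ℕ → Fin r → Fin 2))) (τ : List (Fin 3)) (X : ℕ → Fin 3) :
    Set ((ℕ → Fin 2) × (ℕ → Fin r → Fin 2)) :=
  {q | (avoid τ X q.1, q.2) ∈ P}

/-- The pairs whose second component differs from `Y` in the coordinate `s` from `m` onwards. -/
def differing (s : Fin r) (m : ℕ) (Y : ℕ → Fin r → Fin 2) :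
    Set ((ℕ → Fin 2) × (ℕ → Fin r → Fin 2)) :=
  {q | ∀ k ≥ m, Y k s ≠ q.2 k s}

/-- The disagreement class: each sequence that extends `τ` and avoids `X` is the first component of
a pair in `P` whose second component differs from `Y` in the coordinate `s` from `m` onwards. -/
def disagreement (P : Set ((ℕ → Fin 3) × (ℕ → Fin r → Fin 2))) (s : Fin r) (τ : List (Fin 3))
    (m : ℕ) : Set ((ℕ → Fin 3) × (ℕ → Fin r → Fin 2)) :=
  {p | LeftFullOn (avoiding P τ p.1 ∩ differing s m p.2) []}

variable {P P' : Set ((ℕ → Fin 3) × (ℕ → Fin r → Fin 2))} {s : Fin r} {τ τ' : List (Fin 3)}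
  {m m' : ℕ} {X : ℕ → Fin 3} {Y : ℕ → Fin r → Fin 2}

theorem disagreement_mono (h : P ⊆ P') : disagreement P s τ m ⊆ disagreement P' s τ m :=
  fun _ hp => hp.mono (Set.inter_subset_inter_left _ fun _ hq => h hq) List.prefix_rfl

/-- The third letter: a sequence extending `dodge τ τ'` avoids a sequence that avoids `X`, and
disagreeing twice with `Y` means agreeing with `Y`, as there are only two values. -/
theorem leftFullOn_agreeing (hP' : P' ⊆ disagreement P s τ m)
    (hXY : (X, Y) ∈ disagreement P' s τ' m') :
    LeftFullOn (P ∩ {p | ∀ k ≥ max m m', Y k s = p.2 k s}) (dodge τ τ') := by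
  intro Z hZ
  obtain ⟨W, hW⟩ := exists_avoid_ne_of_dodge hZ X
  obtain ⟨Y', hXY', hYY'⟩ := hXY W (extendsL_nil W)
  obtain ⟨V, rfl⟩ := exists_avoid_eq (hZ.of_prefix (prefix_dodge τ τ')) hW
  obtain ⟨Y'', hZY'', hY'Y''⟩ := hP' hXY' V (extendsL_nil V)
  have htwo (a b c : Fin 2) : a ≠ b → b ≠ c → a = c := by decide +revert
  exact ⟨Y'', hZY'', fun k hk => htwo _ _ _ (hYY' k (le_of_max_le_right hk))
    (hY'Y'' k (le_of_max_le_left hk))⟩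

theorem mem_disagreement_of_leftFullOn {ω : List (Fin 2)}
    (h : LeftFullOn (avoiding P τ X ∩ differing s m Y) ω) :
    ∃ τ', τ <+: τ' ∧ (X, Y) ∈ disagreement P s τ' m := by
  let N := max τ.length ω.length
  refine ⟨seg (avoid τ X (overlay ω 0)) N, (extendsL_avoid τ X _).prefix_seg (le_max_left _ _),
    fun W _ => ?_⟩
  obtain ⟨Y', hP, hY'⟩ := h (overlay (seg (overlay ω 0) N) W)
    ((extendsL_overlay _ W).of_prefix ((extendsL_overlay ω 0).prefix_seg (le_max_right _ _)))
  have hW : avoid (seg (avoid τ X (overlay ω 0)) N) X W =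
      avoid τ X (overlay (seg (overlay ω 0) N) W) := by
    funext n
    rcases lt_or_ge n N with hn | hn
    · have hV : overlay (seg (overlay ω 0) N) W n = overlay ω 0 n := by
        rw [overlay_of_lt _ (by simpa using hn) 0, getD_seg _ hn]
      rw [avoid, overlay_of_lt _ (by simpa using hn) 0, getD_seg _ hn]
      simp only [avoid, overlay.eq_1 τ, hV]
    · have hlen : τ.length ≤ n := (le_max_left _ _).trans hn
      rw [avoid_of_le (by simpa using hn), avoid_of_le hlen, overlay_of_le _ (by simpa using hn)]
  refine ⟨Y', ?_, hY'⟩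
  rwa [avoiding, Set.mem_ofPred_eq, hW]

section Effectivity

variable {L : Type} [Primcodable L] {O : ℕ → L}

theorem EffClosed.exists_effOpen_avoiding (hP : EffClosed O P) (τ : List (Fin 3)) :
    ∃ U : Unit → (ℕ → (((L × Fin 3) × (Fin r → Fin 2)) × Fin 2) × (Fin r → Fin 2)) → Prop,
      EffOpen U ∧ ∀ p : (ℕ → Fin 3) × (ℕ → Fin r → Fin 2), ∀ q,
        q ∈ avoiding P τ p.1 ↔ ¬U () (Paper.withOracle (Paper.withOracle O p) q) := by
  obtain ⟨U, hU, hPU⟩ := hP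
  have hletter : Primrec₂ fun (i : ℕ)
      (x : (((L × Fin 3) × (Fin r → Fin 2)) × Fin 2) × (Fin r → Fin 2)) =>
      ((x.1.1.1.1, τ.getD i (x.1.1.1.2.succAbove x.1.2)), x.2) := by
    have hx := Primrec.snd (α := ℕ)
      (β := (((L × Fin 3) × (Fin r → Fin 2)) × Fin 2) × (Fin r → Fin 2))
    have hOX := Primrec.fst.comp (Primrec.fst.comp (Primrec.fst.comp hx))
    have hget := (primrec₂_getD_succAbove τ).comp Primrec.fst
      (Primrec.pair (Primrec.snd.comp hOX) (Primrec.snd.comp (Primrec.fst.comp hx)))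
    exact Primrec.pair (Primrec.pair (Primrec.fst.comp hOX) hget) (Primrec.snd.comp hx)
  exact ⟨_, hU.map Primrec.id hletter, fun p q => hPU _⟩

theorem EffClosed.avoiding (hP : EffClosed O P) (τ : List (Fin 3))
    (p : (ℕ → Fin 3) × (ℕ → Fin r → Fin 2)) :
    EffClosed (Paper.withOracle O p) (Paper.avoiding P τ p.1) := by
  obtain ⟨U, hU, hPU⟩ := hP.exists_effOpen_avoiding τ
  exact ⟨U, hU, hPU p⟩

theorem EffClosed.disagreement (hP : EffClosed O P) (s : Fin r) (τ : List (Fin 3)) (m : ℕ) :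
    EffClosed O (Paper.disagreement P s τ m) := by
  obtain ⟨U, hU, hPU⟩ := hP.exists_effOpen_avoiding τ
  have hdiffer := effOpen_exists_ge_not (L := L) (A := Fin 3) (A' := Fin 2)
    (fun y y' : Fin r → Fin 2 => y s ≠ y' s) m
  convert (hU.or hdiffer).effClosed_leftFullOn (O := O) [] using 2
  refine Set.ext fun p => iff_of_eq (congrArg (fun R => LeftFullOn R []) (Set.ext fun q => ?_))
  rw [Set.mem_inter_iff, hPU]
  simp [differing, Paper.withOracle]

end Effectivity

/-- The sequence `O'` refines the oracle `O`: each letter of `O` can be read off the letter of `O'`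
at the same place. -/
def Refines {L L' : Type} [Primcodable L] [Primcodable L'] (O' : ℕ → L') (O : ℕ → L) : Prop :=
  ∃ g : L' → L, Primrec g ∧ ∀ n, g (O' n) = O n

namespace Refines

variable {L L' L'' A B : Type} [Primcodable L] [Primcodable L'] [Primcodable L''] [Primcodable A]
  [Primcodable B] {O : ℕ → L} {O' : ℕ → L'} {O'' : ℕ → L''}

theorem refl (O : ℕ → L) : Refines O O := ⟨id, Primrec.id, fun _ => rfl⟩

theorem trans (h' : Refines O'' O') (h : Refines O' O) : Refines O'' O := by
  obtain ⟨g', hg', hO'⟩ := h'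
  obtain ⟨g, hg, hO⟩ := h
  exact ⟨fun x => g (g' x), hg.comp hg', fun n => by simp only [hO', hO]⟩

theorem withOracle (O : ℕ → L) (p : (ℕ → A) × (ℕ → B)) : Refines (Paper.withOracle O p) O :=
  ⟨_, Primrec.fst.comp Primrec.fst, fun _ => rfl⟩

end Refines

namespace Condition

variable {c c' : Condition (Fin 3) (Fin r → Fin 2)}

/-- The condition decides the coordinate `s` of the second components of its branches from some
place onwards. -/
def Decides (c : Condition (Fin 3) (Fin r → Fin 2)) (s : Fin r) : Prop :=
  ∃ (b : ℕ → Fin 2) (m : ℕ), ∀ p ∈ c.branches, ∀ k ≥ m, p.2 k s = b k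

/-- The condition cannot be extended into any of its disagreement classes for the coordinate
`s`. -/
def RulesOutDisagreement (c : Condition (Fin 3) (Fin r → Fin 2)) (s : Fin r) : Prop :=
  ∀ τ m ρ, c.stem <+: τ → c.stem <+: ρ → ¬LeftFullOn (c.cls ∩ disagreement c.cls s τ m) ρ

/-- The two ways in which a condition can ensure that the second components of its branches are
infinitely compatible in the coordinate `s`. -/
def Settles (c : Condition (Fin 3) (Fin r → Fin 2)) (s : Fin r) : Prop :=
  c.Decides s ∨ c.RulesOutDisagreement s

theorem Settles.mono (hc : c.Settles s) (h : c' ≤ c) : c'.Settles s := by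
  refine hc.imp (fun ⟨b, m, hb⟩ => ⟨b, m, fun p hp => hb p (branches_mono h hp)⟩) ?_
  intro hrule τ m ρ hτ hρ hfull
  exact hrule τ m ρ (h.2.trans hτ) (h.2.trans hρ) (hfull.mono
    (Set.inter_subset_inter h.1 (disagreement_mono h.1)) List.prefix_rfl)

variable {L : Type} [Primcodable L] {O : ℕ → L} {C : Set ℕ}

theorem Valid.exists_decides (hO : ¬Computes O C) (hc : c.Valid O)
    (hc' : c'.Valid O) (hτ : c.stem <+: τ) (hdis : c'.cls ⊆ disagreement c.cls s τ m)
    {ρ : List (Fin 3)} (hfull : LeftFullOn (c'.cls ∩ disagreement c'.cls s τ' m') ρ) :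
    ∃ p : (ℕ → Fin 3) × (ℕ → Fin r → Fin 2), ¬Computes (withOracle O p) C ∧
      ∃ d ≤ c, d.Valid (withOracle O p) ∧ d.Decides s := by
  have hvalid : Valid O ⟨_, ρ⟩ := ⟨hc'.effClosed.inter (hc'.effClosed.disagreement s τ' m'), hfull⟩
  obtain ⟨p, hp, hpC, -⟩ := hvalid.exists_branch_not_computes hO (ι := Empty) (Q := nofun) nofun
  exact ⟨p, hpC, ⟨c.cls ∩ {q | ∀ k ≥ max m m', p.2 k s = q.2 k s}, dodge τ τ'⟩,
    ⟨Set.inter_subset_left, hτ.trans (prefix_dodge τ τ')⟩,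
    ⟨(hc.effClosed.withOracle p).inter
        (effClosed_forall_ge (fun y y' : Fin r → Fin 2 => y s = y' s) _ p),
      leftFullOn_agreeing hdis hp.1.2⟩,
    fun k => p.2 k s, max m m', fun q hq k hk => (hq.1.2 k hk).symm⟩

theorem Valid.exists_settles (hO : ¬Computes O C) (hc : c.Valid O) (s : Fin r) :
    ∃ (L' : Type) (_ : Primcodable L') (O' : ℕ → L'), Refines O' O ∧ ¬Computes O' C ∧
      ∃ d ≤ c, d.Valid O' ∧ d.Settles s := by
  by_cases hrule : c.RulesOutDisagreement s
  · exact ⟨L, _, O, .refl O, hO, c, le_rfl, hc, .inr hrule⟩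
  simp only [RulesOutDisagreement, not_forall, not_not] at hrule
  obtain ⟨τ, m, ρ, hτ, hρ, hfull⟩ := hrule
  let c' : Condition (Fin 3) (Fin r → Fin 2) := ⟨c.cls ∩ disagreement c.cls s τ m, ρ⟩
  have hc' : c'.Valid O := ⟨hc.effClosed.inter (hc.effClosed.disagreement s τ m), hfull⟩
  by_cases hrule' : c'.RulesOutDisagreement s
  · exact ⟨L, _, O, .refl O, hO, c', ⟨Set.inter_subset_left, hρ⟩, hc', .inr hrule'⟩
  simp only [RulesOutDisagreement, not_forall, not_not] at hrule'
  obtain ⟨τ', m', ρ', -, -, hfull'⟩ := hrule'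
  obtain ⟨p, hpC, d, hd, hvalid, hdecides⟩ :=
    hc.exists_decides hO hc' hτ Set.inter_subset_right hfull'
  exact ⟨_, _, withOracle O p, .withOracle O p, hpC, d, hd, hvalid, .inl hdecides⟩

theorem Valid.exists_settles_forall_mem (hO : ¬Computes O C) (hc : c.Valid O)
    (S : Finset (Fin r)) :
    ∃ (L' : Type) (_ : Primcodable L') (O' : ℕ → L'), Refines O' O ∧ ¬Computes O' C ∧
      ∃ d ≤ c, d.Valid O' ∧ ∀ s ∈ S, d.Settles s := by
  classical
  induction S using Finset.induction_on with
  | empty => exact ⟨L, _, O, .refl O, hO, c, le_rfl, hc, by simp⟩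
  | insert s S _ ih =>
    obtain ⟨L', _, O', hO'O, hO', d, hdc, hd, hS⟩ := ih
    obtain ⟨L'', _, O'', hO''O', hO'', e, hed, he, hs⟩ := hd.exists_settles hO' s
    exact ⟨L'', _, O'', hO''O'.trans hO'O, hO'', e, hed.trans hdc, he,
      Finset.forall_mem_insert .. |>.2 ⟨hs, fun t ht => (hS t ht).mono hed⟩⟩

theorem Valid.exists_compatible_of_settles (hO : ¬Computes O C) (hc : c.Valid O)
    (hs : ∀ s, c.Settles s) :
    ∃ p ∈ c.cls, ∃ q ∈ avoiding c.cls c.stem p.1, (∀ s m, q ∉ differing s m p.2) ∧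
      ¬Computes (withOracle (withOracle O p) q) C := by
  obtain ⟨p, hp, hpC, hpdis⟩ := hc.exists_branch_not_computes hO
    (Q := fun x : Fin r × List (Fin 3) × ℕ => disagreement c.cls x.1 x.2.1 x.2.2)
    fun x => hc.effClosed.disagreement x.1 x.2.1 x.2.2
  have havoid : Valid (withOracle O p) ⟨avoiding c.cls c.stem p.1, []⟩ :=
    ⟨hc.effClosed.avoiding c.stem p, fun W _ =>
      hc.leftFullOn _ (extendsL_avoid c.stem p.1 W)⟩
  obtain ⟨q, hq, hqC, hqdiff⟩ := havoid.exists_branch_not_computes hpC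
    (Q := fun x : Fin r × ℕ => differing x.1 x.2 p.2)
    fun x => effClosed_forall_ge (fun y y' : Fin r → Fin 2 => y x.1 ≠ y' x.1) x.2 p
  refine ⟨p, hp.1, q, hq.1, fun s m hdiff => ?_, hqC⟩
  rcases hs s with ⟨b, m', hb⟩ | hrule
  · have hpb := hb p hp _ (le_max_right m m')
    have hqb := hb _ ⟨hq.1, extendsL_avoid c.stem p.1 q.1⟩ _ (le_max_right m m')
    exact hdiff _ (le_max_left m m') (hpb.trans hqb.symm)
  · obtain ⟨ω, -, hω⟩ := hqdiff (s, m) hdiff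
    obtain ⟨τ, hτ, hpτ⟩ := mem_disagreement_of_leftFullOn hω
    obtain ⟨ρ, hρ, hfull⟩ := hpdis (s, τ, m) hpτ
    exact hrule τ m ρ hτ hρ hfull

end Condition

end CrossConstraint

/-! ### Paths of cross-trees -/

section Paths

variable {r : ℕ} {T : CrossTree r} {O : ℕ → ℕ} {C : Set ℕ}

/-- The paths of a cross-tree, as a class of pairs of sequences; the second components are read as
one sequence of tuples. -/
def paths (T : CrossTree r) : Set ((ℕ → Fin 3) × (ℕ → Fin r → Fin 2)) :=
  {p | IsPath T p.1 fun s k => p.2 k s}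

theorem LeftFull.leftFullOn_paths (hT : LeftFull T) : LeftFullOn (paths T) [] := fun X hX => by
  obtain ⟨Y, -, hY⟩ := hT X hX
  exact ⟨fun k s => Y s k, hY⟩

theorem encNode_injective : Function.Injective (encNode (r := r)) := fun p q h => by
  obtain ⟨h₁, h₂⟩ := Nat.pair_eq_pair.1 h
  exact Prod.ext (Encodable.encode_injective h₁)
    (List.ofFn_injective (Encodable.encode_injective h₂))

/-- The node of a cross-tree that consists of the components of a string of tuples. -/
def node (l : List ((ℕ × Fin 3) × (Fin r → Fin 2))) : Str3 × StrTup r :=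
  (l.map fun x => x.1.2, fun s => l.map fun x => x.2 s)

theorem node_seg (O : ℕ → ℕ) (p : (ℕ → Fin 3) × (ℕ → Fin r → Fin 2)) (n : ℕ) :
    node (seg (withOracle O p) n) = (seg p.1 n, fun s => seg (fun k => p.2 k s) n) := by
  simp only [node, map_seg, withOracle]

theorem primrec_encNode_node :
    Primrec fun l : List ((ℕ × Fin 3) × (Fin r → Fin 2)) => encNode (node l) := by
  have hget (s : Fin r) : Primrec fun y : Fin r → Fin 2 => y s := Primrec.dom_finite _
  exact Primrec₂.natPair.comp
    (Primrec.encode.comp (Primrec.list_map Primrec.id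
      (Primrec.snd.comp (Primrec.fst.comp Primrec.snd)).to₂))
    (Primrec.encode.comp (Primrec.list_ofFn fun s => Primrec.list_map Primrec.id
      ((hget s).comp (Primrec.snd.comp Primrec.snd)).to₂))

theorem effClosed_paths (hT : SigmaIn O {n | ∃ p ∈ T.mem, encNode p = n}ᶜ) :
    EffClosed O (paths T) := by
  obtain ⟨c, hc⟩ := hT
  have hnode (p : Str3 × StrTup r) : (oeval O c (encNode p)).Dom ↔ p ∉ T.mem := by
    rw [← hc]
    simp only [Set.mem_compl_iff, Set.mem_ofPred_eq, encNode_injective.eq_iff, exists_eq_right]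
  have houtside := (effOpen_oeval_dom c).map
    (φ := fun x : Unit × List ((ℕ × Fin 3) × (Fin r → Fin 2)) => encNode (node x.2))
    (g := fun _ (y : (ℕ × Fin 3) × (Fin r → Fin 2)) => y.1.1)
    (primrec_encNode_node.comp Primrec.snd) (Primrec.fst.comp (Primrec.fst.comp Primrec.snd))
  refine ⟨_, ((effOpen_exists_seg_eq.reparam Primrec.snd).and houtside).exists_param, fun p => ?_⟩
  simp [paths, IsPath, hnode, ← node_seg O p, withOracle]

theorem recIn_solOracle {L : Type} [Primcodable L] {z : ℕ → L} {a : ℕ → L → Fin 3}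
    (ha : Primrec₂ a) {b : L → Fin r → Fin 2} (hb : Primrec b) :
    RecIn (codes z) (solOracle (fun k => a k (z k)) fun s k => b (z k) s) := by
  let entry (u : ℕ) (x : Fin 3) (y : Fin r → Fin 2) : ℕ :=
    (x.val :: List.ofFn fun s => (y s).val).getD u 0
  have hentries : Primrec fun x : Fin 3 × (Fin r → Fin 2) =>
      x.1.val :: List.ofFn fun s => (x.2 s).val := Primrec.dom_finite _
  have hentry : Primrec₂ fun (n : ℕ) x => entry n.unpair.1 (a n.unpair.2 x) (b x) :=
    (Primrec.list_getD 0).comp (hentries.comp (Primrec.pair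
      (ha.comp (Primrec.snd.comp (Primrec.unpair.comp Primrec.fst)) Primrec.snd)
      (hb.comp Primrec.snd))) (Primrec.fst.comp (Primrec.unpair.comp Primrec.fst))
  convert RecIn.of_letter (z := z) (Primrec.snd.comp Primrec.unpair) hentry using 1
  funext n
  rcases hn : n.unpair.1 with _ | u
  · simp [solOracle, entry, hn]
  · by_cases h : u < r <;> simp [solOracle, entry, hn, h]

theorem not_recIn_joinF_solOracle {L : Type} [Primcodable L] {O' : ℕ → L} (hO' : Refines O' O)
    {p : (ℕ → Fin 3) × (ℕ → Fin r → Fin 2)} {q : (ℕ → Fin 2) × (ℕ → Fin r → Fin 2)}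
    (hC : ¬Computes (withOracle (withOracle O' p) q) C) (τ : List (Fin 3)) :
    ¬RecIn (joinF O (joinF (solOracle p.1 fun s k => p.2 k s)
      (solOracle (avoid τ p.1 q.1) fun s k => q.2 k s))) (chi C) := by
  refine fun h => hC (Computes.of_codes (computes_iff_recIn.2 (RecIn.trans ?_ h)))
  obtain ⟨g, hg, hO⟩ := hO'
  let z := withOracle (withOracle O' p) q
  have hfst : Primrec fun x : (((L × Fin 3) × (Fin r → Fin 2)) × Fin 2) × (Fin r → Fin 2) =>
      x.1.1.1 := Primrec.fst.comp (Primrec.fst.comp Primrec.fst)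
  have hbase : RecIn (codes z) O := by
    simpa only [z, withOracle, id_eq, hO] using RecIn.of_letter (z := z) Primrec.id
      (h := fun _ x => g x.1.1.1.1) (hg.comp (Primrec.fst.comp (hfst.comp Primrec.snd)))
  have hfirst := recIn_solOracle (z := z) (a := fun _ x => x.1.1.1.2) (b := fun x => x.1.1.2)
    (Primrec.snd.comp (hfst.comp Primrec.snd)) (Primrec.snd.comp (Primrec.fst.comp Primrec.fst))
  have hsecond := recIn_solOracle (z := z)
    (a := fun k x => τ.getD k (x.1.1.1.2.succAbove x.1.2)) (b := fun x => x.2)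
    ((primrec₂_getD_succAbove τ).comp Primrec.fst (Primrec.pair
      (Primrec.snd.comp (hfst.comp Primrec.snd))
      (Primrec.snd.comp (Primrec.fst.comp Primrec.snd)))) Primrec.snd
  exact hbase.joinF (hfirst.joinF hsecond)

theorem ccSolution_of_avoiding {τ : List (Fin 3)} {p : (ℕ → Fin 3) × (ℕ → Fin r → Fin 2)}
    {q : (ℕ → Fin 2) × (ℕ → Fin r → Fin 2)} (hp : p ∈ paths T)
    (hq : q ∈ avoiding (paths T) τ p.1) (hpq : ∀ s m, q ∉ differing s m p.2) :
    CCSolution T ![p.1, avoid τ p.1 q.1] ![fun s k => p.2 k s, fun s k => q.2 k s] := by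
  refine ⟨Fin.forall_fin_two.2 ⟨hp, hq⟩, fun j => ?_, fun s => ?_⟩
  · refine (Set.finite_lt_nat τ.length).subset fun n ⟨hX, hX'⟩ => ?_
    by_contra hn
    have hne := Fin.succAbove_ne (p.1 n) (q.1 n)
    rw [← avoid_of_le (not_lt.1 hn)] at hne
    exact hne (hX'.trans hX.symm)
  · have hagree : {k | p.2 k s = q.2 k s}.Infinite := by
      refine Set.infinite_of_not_bddAbove fun ⟨m, hm⟩ => hpq s (m + 1) fun k hk hks => ?_
      exact absurd (hm hks) (by omega)
    by_contra! hfin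
    refine hagree ((Set.finite_iUnion fun j => hfin j).subset fun k hk => ?_)
    exact Set.mem_iUnion.2 ⟨p.2 k s, rfl, hk.symm⟩

end Paths

theorem cc_cone_avoidance_general {C : Set ℕ} {O : ℕ → ℕ} (hC : ¬RecIn O (chi C)) {r : ℕ}
    {T : CrossTree r} (hT : SigmaIn O {n | ∃ p ∈ T.mem, encNode p = n}ᶜ) (hfull : LeftFull T) :
    ∃ (X : Fin 2 → ℕ → Fin 3) (Y : Fin 2 → Fin r → ℕ → Fin 2), CCSolution T X Y ∧
      ¬RecIn (joinF O (joinF (solOracle (X 0) (Y 0)) (solOracle (X 1) (Y 1)))) (chi C) := by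
  have hc : Condition.Valid O ⟨paths T, []⟩ := ⟨effClosed_paths hT, hfull.leftFullOn_paths⟩
  obtain ⟨L, _, O', hO'O, hO', d, hd, hvalid, hsettles⟩ :=
    hc.exists_settles_forall_mem (mt computes_iff_recIn.1 hC) Finset.univ
  obtain ⟨p, hp, q, hq, hpq, hpqC⟩ :=
    hvalid.exists_compatible_of_settles hO' fun s => hsettles s (Finset.mem_univ s)
  exact ⟨_, _, ccSolution_of_avoiding (hd.1 hp) (hd.1 hq) hpq,
    not_recIn_joinF_solOracle hO'O hpqC d.stem⟩

end Paper

namespace Paper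

/-- Cross-constraint cone avoidance: for every non-computable set `C`, every left-full
computable instance of the cross-constraint problem has a solution whose join does
not compute `C`. -/
theorem cc_cone_avoidance (C : Set ℕ) (hC : ¬ RecIn zeroO (chi C))
    (r : ℕ) (T : CrossTree r) (hcomp : TreeComputable T) (hfull : LeftFull T) :
    ∃ (X : Fin 2 → ℕ → Fin 3) (Y : Fin 2 → Fin r → ℕ → Fin 2),
      CCSolution T X Y ∧
      ¬ RecIn (joinF (solOracle (X 0) (Y 0)) (solOracle (X 1) (Y 1))) (chi C) := by
  obtain ⟨X, Y, hXY, hC'⟩ := cc_cone_avoidance_general hC hcomp.sigmaIn_compl hfull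
  exact ⟨X, Y, hXY, fun h => hC' h.joinF_right⟩

end Paper
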